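/- arXiv:1108.2555 — 2 statements merged into one kernel-verified Lean document; each statement's English description precedes it below -/
import Mathlib

section
/- For all 0 < σ < 1 and 0 < κ < 1 there is ε₃ > 0 such that for all sufficiently small δ > 0 the following holds. Let S ⊆ [1/2, 2] be a finite union of closed intervals of length δ such that S = S⁻¹ (S is closed under x ↦ 1/x), |S| = δ^{1−σ} (Lebesgue measure), and for every ρ with δ < ρ < δ^{ε₃}, max_{a∈ℝ} |S ∩ [a−ρ, a+ρ]| < ρ^{κ} · |S|. Let γ, λ ∈ ℝ with γ > 0 and |λ| ≥ δ^{ε₃}. Then the set D = { xy + γ/(xy) + λ(x/y + y/x) : x, y ∈ S_{(4)} } ⊆ ℝ satisfies N_δ(D) ≥ δ^{−ε₃−σ}. -/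
open MeasureTheory Set
open scoped Pointwise

/-- `covN d δ S` is the least number of balls of radius `δ` (w.r.t. the distance
function `d`) needed to cover `S`. -/
noncomputable def covN {X : Type*} (d : X → X → ℝ) (δ : ℝ) (S : Set X) : ℕ :=
  sInf {n : ℕ | ∃ T : Finset X, T.card = n ∧ ∀ s ∈ S, ∃ t ∈ T, d s t ≤ δ}

/-! The proof reduces the theorem to a discretized ring theorem over `ℝ`.

Write `jk γ x = x² + γ / x²` and suppose that `D` has a small covering number. Fix `s₀ ∈ S`. With
`x = s₀ s u v` and `y = s₀ s u⁻¹ v⁻¹` (here `S = S⁻¹` is used) one gets `X + λ H ⊆ D`, where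
`X = {jk γ (s₀ s)}` and `H = {jk 1 (u v)}`. Away from its critical point `jk` does not contract
distances much, so after restricting to a part of `S` of comparable measure (`exists_side`) the set
`X` is about as large as `S`, and `G = {jk 1 s}` inherits both size and non-concentration from `S`
(`volume_le_count`). The identity `jk 1 s * jk 1 t = jk 1 (s t) + jk 1 (s / t)` shows
`G G ⊆ H + H`. Since `X + λ H` is hardly larger than `X`, Plünnecke's inequality
(`plunnecke_cells`) bounds the covering number of the sixfold sumset of `G G - G G` by
`δ ^ (-O(ε))` times that of `G`, which contradicts `discretized_ring`.

For `discretized_ring`, a set `A` with few sums of differences of products has covering numbers that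
are almost superadditive in the scale (`cn_superadd`). By pigeonholing (`exists_stable`) one finds a
scale at which the growth exponent of the covering numbers is stable. There `A` looks
`p`-dimensional at all coarser scales, with `p` bounded away from `0` and `1`; this is the structure
`RegularRing`. It cannot exist (`no_regularRing`). On the one hand the quotients
`(a - b) / (c - d)` are dense in `[0, 1]` (`gap`, `density`), so for every slope `t ∈ [0, 1]` the
image of `A × A` under `(x, y) ↦ x + t y` is contained, up to a dilation, in a small set and there
are many near collisions (`energy_lower`). On the other hand, two given points of `A × A` with
separated second coordinates collide for few slopes only (`fiber_upper`), and since `0 < p < 1` this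
leaves too few near collisions altogether (`energy`). -/

/-! ### Covering numbers -/

/-- The number of cells `[k r, (k+1) r)`, `k ∈ ℤ`, of the grid of mesh `r` that meet `X`. -/
noncomputable def cn (r : ℝ) (X : Set ℝ) : ℕ := ((fun x : ℝ => ⌊x / r⌋) '' X).ncard

lemma cells_finite {r : ℝ} (hr : 0 < r) {X : Set ℝ} (hX : ∃ B, ∀ x ∈ X, |x| ≤ B) :
    ((fun x : ℝ => ⌊x / r⌋) '' X).Finite := by
  obtain ⟨B, hB⟩ := hX
  apply (Set.finite_Icc ⌊-B / r⌋ ⌊B / r⌋).subset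
  rintro _ ⟨x, hx, rfl⟩
  have := abs_le.1 (hB x hx)
  exact ⟨Int.floor_le_floor (by gcongr; exact this.1), Int.floor_le_floor (by gcongr; exact this.2)⟩

lemma abs_sub_lt_of_floor_eq {r x y : ℝ} (hr : 0 < r) (h : ⌊x / r⌋ = ⌊y / r⌋) : |x - y| < r := by
  have := Int.abs_sub_lt_one_of_floor_eq_floor h
  rw [← sub_div, abs_div, abs_of_pos hr, div_lt_one hr] at this
  exact this

lemma cn_pos {r : ℝ} (hr : 0 < r) {X : Set ℝ} (hX : ∃ B, ∀ x ∈ X, |x| ≤ B) (hne : X.Nonempty) :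
    (1 : ℝ) ≤ cn r X := by
  have : 0 < cn r X := (Set.ncard_pos (cells_finite hr hX)).2 (hne.image _)
  exact_mod_cast this

/-- Double counting: if the fibres of `F` over intervals of length `r` have at most `m` elements,
then `I` has at most `m` times as many elements as there are cells met by the image. -/
lemma card_le_fiber_mul_cn {ι : Type*} (I : Finset ι) (F : ι → ℝ) {r : ℝ} (hr : 0 < r) {Y : Set ℝ}
    (hY : ∃ B, ∀ y ∈ Y, |y| ≤ B) {m : ℝ} (hm0 : 0 ≤ m) (hF : ∀ i ∈ I, F i ∈ Y)
    (hm : ∀ i ∈ I, (((I.filter fun j => |F j - F i| < r).card : ℕ) : ℝ) ≤ m) :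
    (I.card : ℝ) ≤ m * cn r Y := by
  classical
  have hfin := cells_finite hr hY
  have key : I.card ≤ ⌊m⌋₊ * hfin.toFinset.card := by
    apply Finset.card_le_mul_card_image_of_maps_to (f := fun i => ⌊F i / r⌋)
    · intro i hi
      rw [Set.Finite.mem_toFinset]
      exact ⟨F i, hF i hi, rfl⟩
    · intro b _
      by_cases hb : (I.filter fun i => ⌊F i / r⌋ = b) = ∅
      · rw [hb]; simp
      · obtain ⟨i, hi⟩ := Finset.nonempty_iff_ne_empty.2 hb
        rw [Finset.mem_filter] at hi
        refine le_trans (Finset.card_le_card ?_) (Nat.le_floor (hm i hi.1))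
        intro j hj
        rw [Finset.mem_filter] at hj ⊢
        exact ⟨hj.1, abs_sub_lt_of_floor_eq hr (hj.2.trans hi.2.symm)⟩
  have h2 : cn r Y = hfin.toFinset.card := Set.ncard_eq_toFinset_card _ hfin
  rw [h2]
  calc (I.card : ℝ) ≤ (⌊m⌋₊ : ℝ) * hfin.toFinset.card := by exact_mod_cast key
    _ ≤ m * hfin.toFinset.card := by gcongr; exact Nat.floor_le hm0

/-- Cauchy-Schwarz lower bound for the number of near-collisions of `F`. -/
lemma sq_card_le_cn_mul {ι : Type*} (I : Finset ι) (F : ι → ℝ) {r : ℝ} (hr : 0 < r) {Y : Set ℝ}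
    (hY : ∃ B, ∀ y ∈ Y, |y| ≤ B) (hF : ∀ i ∈ I, F i ∈ Y) :
    (I.card : ℝ) ^ 2 ≤ cn r Y * (((I ×ˢ I).filter fun q => |F q.1 - F q.2| < r).card : ℝ) := by
  classical
  have hfin := cells_finite hr hY
  have h2 : cn r Y = hfin.toFinset.card := Set.ncard_eq_toFinset_card _ hfin
  have hmaps : ∀ i ∈ I, ⌊F i / r⌋ ∈ hfin.toFinset := by
    intro i hi
    rw [Set.Finite.mem_toFinset]
    exact ⟨F i, hF i hi, rfl⟩
  have h3 : I.card = ∑ b ∈ hfin.toFinset, (I.filter fun i => ⌊F i / r⌋ = b).card :=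
    Finset.card_eq_sum_card_fiberwise hmaps
  have h4 : ∑ b ∈ hfin.toFinset, (I.filter fun i => ⌊F i / r⌋ = b).card ^ 2 ≤
      ((I ×ˢ I).filter fun q => |F q.1 - F q.2| < r).card := by
    have : ((I ×ˢ I).filter fun q => ⌊F q.1 / r⌋ = ⌊F q.2 / r⌋).card =
        ∑ b ∈ hfin.toFinset, (I.filter fun i => ⌊F i / r⌋ = b).card ^ 2 := by
      rw [Finset.card_eq_sum_card_fiberwise (f := fun q : ι × ι => ⌊F q.1 / r⌋)
        (t := hfin.toFinset)]
      · apply Finset.sum_congr rfl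
        intro b _
        rw [sq, ← Finset.card_product]
        congr 1
        ext ⟨i, j⟩
        simp only [Finset.mem_filter, Finset.mem_product]
        constructor
        · rintro ⟨⟨⟨h1, h2⟩, h3⟩, h4⟩
          exact ⟨⟨h1, h4⟩, h2, h3 ▸ h4⟩
        · rintro ⟨⟨h1, h2⟩, h3, h4⟩
          exact ⟨⟨⟨h1, h3⟩, h2.trans h4.symm⟩, h2⟩
      · intro q hq
        have hq' := Finset.mem_filter.1 hq
        exact hmaps _ (Finset.mem_product.1 hq'.1).1
    rw [← this]
    apply Finset.card_le_card
    intro q hq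
    rw [Finset.mem_filter] at hq ⊢
    exact ⟨hq.1, abs_sub_lt_of_floor_eq hr hq.2⟩
  have h5 : I.card ^ 2 ≤ hfin.toFinset.card *
      ((I ×ˢ I).filter fun q => |F q.1 - F q.2| < r).card := by
    refine le_trans ?_ (Nat.mul_le_mul_left _ h4)
    conv_lhs => rw [h3]
    exact sq_sum_le_card_mul_sum_sq
  rw [h2]
  exact_mod_cast h5

/-- One point of `X` in each cell of mesh `r` that meets `X`. -/
lemma exists_section {r : ℝ} (hr : 0 < r) {X : Set ℝ} (hX : ∃ B, ∀ x ∈ X, |x| ≤ B) :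
    ∃ Z : Finset ℝ, (∀ z ∈ Z, z ∈ X) ∧ Z.card = cn r X ∧
      ∀ x ∈ Z, ∀ y ∈ Z, ⌊x / r⌋ = ⌊y / r⌋ → x = y := by
  classical
  have hfin := cells_finite hr hX
  have h1 : ∀ k ∈ hfin.toFinset, ∃ x, x ∈ X ∧ ⌊x / r⌋ = k := by
    intro k hk
    rw [Set.Finite.mem_toFinset] at hk
    exact hk
  choose! g hg1 hg2 using h1
  refine ⟨hfin.toFinset.image g, ?_, ?_, ?_⟩
  · intro z hz
    obtain ⟨k, hk, rfl⟩ := Finset.mem_image.1 hz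
    exact hg1 k hk
  · rw [Finset.card_image_of_injOn]
    · exact (Set.ncard_eq_toFinset_card _ hfin).symm
    · intro a ha b hb hab
      rw [← hg2 a ha, ← hg2 b hb, hab]
  · intro x hx y hy hxy
    obtain ⟨k, hk, rfl⟩ := Finset.mem_image.1 hx
    obtain ⟨l, hl, rfl⟩ := Finset.mem_image.1 hy
    rw [hg2 k hk, hg2 l hl] at hxy
    rw [hxy]

/-- A set of points in distinct cells of mesh `r`, of diameter at most `ℓ`, has at most
`ℓ / r + 2` elements. -/
lemma card_le_of_diam {r ℓ : ℝ} (hr : 0 < r) (hℓ : 0 ≤ ℓ) (Z : Finset ℝ)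
    (hinj : ∀ x ∈ Z, ∀ y ∈ Z, ⌊x / r⌋ = ⌊y / r⌋ → x = y)
    (hd : ∀ x ∈ Z, ∀ y ∈ Z, |x - y| ≤ ℓ) : (Z.card : ℝ) ≤ ℓ / r + 2 := by
  classical
  by_cases hZ : Z.Nonempty
  · obtain ⟨z0, hz0, hmin⟩ := Z.exists_min_image id hZ
    have h1 : Z.card ≤ (Finset.Icc ⌊z0 / r⌋ ⌊(z0 + ℓ) / r⌋).card := by
      apply Finset.card_le_card_of_injOn (fun x => ⌊x / r⌋)
      · intro x hx
        rw [Finset.mem_coe, Finset.mem_Icc]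
        have := (abs_le.1 (hd x hx z0 hz0)).2
        refine ⟨Int.floor_le_floor ?_, Int.floor_le_floor ?_⟩
        · have := hmin x hx
          simp only [id] at this
          gcongr
        · gcongr; linarith
      · intro x hx y hy h
        exact hinj x hx y hy h
    rw [Int.card_Icc] at h1
    have h3 : ⌊z0 / r⌋ ≤ ⌊(z0 + ℓ) / r⌋ := Int.floor_le_floor (by gcongr; linarith)
    have h2 : (Z.card : ℤ) ≤ ⌊(z0 + ℓ) / r⌋ + 1 - ⌊z0 / r⌋ := by omega
    have h2' : (Z.card : ℝ) ≤ (⌊(z0 + ℓ) / r⌋ : ℝ) + 1 - ⌊z0 / r⌋ := by exact_mod_cast h2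
    have h4 := Int.floor_le ((z0 + ℓ) / r)
    have h5 := Int.lt_floor_add_one (z0 / r)
    have h6 := add_div z0 ℓ r
    linarith
  · rw [Finset.not_nonempty_iff_eq_empty] at hZ
    subst hZ
    have : 0 ≤ ℓ / r := by positivity
    simp; linarith

lemma bdd_mono {X Y : Set ℝ} (h : X ⊆ Y) (hY : ∃ B, ∀ x ∈ Y, |x| ≤ B) : ∃ B, ∀ x ∈ X, |x| ≤ B :=
  hY.imp fun _ hB x hx => hB x (h hx)

lemma cn_le_of_diam {r ℓ : ℝ} (hr : 0 < r) (hℓ : 0 ≤ ℓ) {X : Set ℝ}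
    (hX : ∃ B, ∀ x ∈ X, |x| ≤ B) (hd : ∀ x ∈ X, ∀ y ∈ X, |x - y| ≤ ℓ) :
    (cn r X : ℝ) ≤ ℓ / r + 2 := by
  obtain ⟨Z, hZ, hc, hinj⟩ := exists_section hr hX
  rw [← hc]
  exact card_le_of_diam hr hℓ Z hinj fun x hx y hy => hd x (hZ x hx) y (hZ y hy)

/-- Comparison of covering numbers along a map that does not contract too much. -/
lemma cn_comp {r r' ℓ : ℝ} (hr : 0 < r) (hr' : 0 < r') (hℓ : 0 ≤ ℓ) {X Y : Set ℝ}
    (hX : ∃ B, ∀ x ∈ X, |x| ≤ B) (hY : ∃ B, ∀ x ∈ Y, |x| ≤ B) (F : ℝ → ℝ)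
    (hF : ∀ x ∈ X, F x ∈ Y) (h : ∀ x ∈ X, ∀ y ∈ X, |F x - F y| < r' → |x - y| ≤ ℓ) :
    (cn r X : ℝ) ≤ (2 * ℓ / r + 2) * cn r' Y := by
  classical
  obtain ⟨Z, hZ, hc, hinj⟩ := exists_section hr hX
  rw [← hc]
  apply card_le_fiber_mul_cn Z F hr' hY (by positivity) (fun i hi => hF i (hZ i hi))
  intro i hi
  apply card_le_of_diam hr (by positivity)
  · intro x hx y hy
    exact hinj x (Finset.mem_filter.1 hx).1 y (Finset.mem_filter.1 hy).1
  · intro x hx y hy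
    rw [Finset.mem_filter] at hx hy
    have h1 := h x (hZ x hx.1) i (hZ i hi) hx.2
    have h2 := h y (hZ y hy.1) i (hZ i hi) hy.2
    rw [abs_sub_comm y i] at h2
    calc |x - y| = |(x - i) + (i - y)| := by ring_nf
      _ ≤ |x - i| + |i - y| := abs_add_le _ _
      _ ≤ 2 * ℓ := by linarith

lemma cn_mono {r : ℝ} (hr : 0 < r) {X Y : Set ℝ} (hY : ∃ B, ∀ x ∈ Y, |x| ≤ B) (h : X ⊆ Y) :
    (cn r X : ℝ) ≤ cn r Y := by
  have : cn r X ≤ cn r Y := Set.ncard_le_ncard (Set.image_mono h) (cells_finite hr hY)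
  exact_mod_cast this

lemma card_eq_cn {r : ℝ} (Z : Finset ℝ)
    (hinj : ∀ x ∈ Z, ∀ y ∈ Z, ⌊x / r⌋ = ⌊y / r⌋ → x = y) : Z.card = cn r (Z : Set ℝ) := by
  rw [cn, Set.InjOn.ncard_image (fun x hx y hy => hinj x hx y hy), Set.ncard_coe_finset]

/-- A set of pairs is counted by its second projection and the sizes of the slices. -/
lemma card_le_slices (P : Finset (ℝ × ℝ)) {m₁ m₂ : ℝ} (h0 : 0 ≤ m₁)
    (h₁ : ∀ b, ((P.filter fun q => q.2 = b).card : ℝ) ≤ m₁)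
    (h₂ : ((P.image Prod.snd).card : ℝ) ≤ m₂) : (P.card : ℝ) ≤ m₁ * m₂ := by
  classical
  have key : P.card ≤ ⌊m₁⌋₊ * (P.image Prod.snd).card := by
    apply Finset.card_le_mul_card_image
    intro b _
    exact Nat.le_floor (h₁ b)
  calc (P.card : ℝ) ≤ (⌊m₁⌋₊ : ℝ) * (P.image Prod.snd).card := by exact_mod_cast key
    _ ≤ m₁ * (P.image Prod.snd).card := by gcongr; exact Nat.floor_le h0
    _ ≤ m₁ * m₂ := by gcongr

/-- If `W` has diameter at most `D`, then the translates of `W` by a `D`-separated subset of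
`g • A` are essentially disjoint, which gives a lower bound for the covering number of
`W + g • A`. -/
lemma cn_mul_cn_le {δ r D d g k : ℝ} (hδ : 0 < δ) (hr : δ ≤ r) (hD : 0 ≤ D) (hDr : D ≤ d * r)
    (hg : 1 ≤ g) {W A Y : Set ℝ} (hW : ∃ B, ∀ x ∈ W, |x| ≤ B) (hA : ∃ B, ∀ x ∈ A, |x| ≤ B)
    (hY : ∃ B, ∀ x ∈ Y, |x| ≤ B) (hd : ∀ x ∈ W, ∀ y ∈ W, |x - y| ≤ D)
    (hS : ∀ w ∈ W, ∀ a ∈ A, w + g * a + k ∈ Y) :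
    (cn δ W : ℝ) * cn r A ≤ (4 * (2 * d + 4)) * cn δ Y := by
  classical
  have hr0 : 0 < r := lt_of_lt_of_le hδ hr
  have hd0 : 0 ≤ d := by
    by_contra h
    push Not at h
    nlinarith
  obtain ⟨Z, hZ, hc, hinj⟩ := exists_section hδ hW
  obtain ⟨Z', hZ', hc', hinj'⟩ := exists_section hr0 hA
  rw [← hc, ← hc']
  have h1 : ((Z ×ˢ Z').card : ℝ) ≤ (4 * (2 * d + 4)) * cn δ Y := by
    apply card_le_fiber_mul_cn (Z ×ˢ Z') (fun q => q.1 + g * q.2 + k) hδ hY (by positivity)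
    · intro q hq
      rw [Finset.mem_product] at hq
      exact hS _ (hZ _ hq.1) _ (hZ' _ hq.2)
    · rintro ⟨w0, a0⟩ hq0
      rw [Finset.mem_product] at hq0
      have ha : ∀ q ∈ (Z ×ˢ Z').filter
          (fun j => |j.1 + g * j.2 + k - (w0 + g * a0 + k)| < δ), |q.2 - a0| ≤ δ + D := by
        intro q hq
        rw [Finset.mem_filter, Finset.mem_product] at hq
        have h1 := hd _ (hZ _ hq.1.1) _ (hZ _ hq0.1)
        have h2 : |g * (q.2 - a0)| ≤ δ + D := by
          have e1 : g * (q.2 - a0) = (q.1 + g * q.2 + k - (w0 + g * a0 + k)) + (w0 - q.1) := by ring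
          rw [e1]
          refine (abs_add_le _ _).trans ?_
          rw [abs_sub_comm w0]
          exact add_le_add hq.2.le h1
        rw [abs_mul, abs_of_pos (by linarith : (0:ℝ) < g)] at h2
        nlinarith [abs_nonneg (q.2 - a0)]
      apply card_le_slices _ (by norm_num)
      · intro b
        have := card_le_of_diam (ℓ := 2 * δ) hδ (by positivity)
          ((((Z ×ˢ Z').filter (fun j => |j.1 + g * j.2 + k - (w0 + g * a0 + k)| < δ)).filter
            (fun q => q.2 = b)).image Prod.fst) ?_ ?_
        · rw [Finset.card_image_of_injOn] at this
          · have e2 : 2 * δ / δ + 2 = 4 := by field_simp; norm_num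
            rw [e2] at this
            exact this
          · intro x hx y hy hxy
            have hx' := (Finset.mem_filter.1 hx).2
            have hy' := (Finset.mem_filter.1 hy).2
            exact Prod.ext hxy (hx'.trans hy'.symm)
        · intro x hx y hy
          simp only [Finset.mem_image, Finset.mem_filter, Finset.mem_product] at hx hy
          obtain ⟨q, hq, rfl⟩ := hx
          obtain ⟨q', hq', rfl⟩ := hy
          exact hinj _ hq.1.1.1 _ hq'.1.1.1
        · intro x hx y hy
          simp only [Finset.mem_image, Finset.mem_filter, Finset.mem_product] at hx hy
          obtain ⟨q, hq, rfl⟩ := hx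
          obtain ⟨q', hq', rfl⟩ := hy
          have e1 := abs_lt.1 hq.1.2
          have e2 := abs_lt.1 hq'.1.2
          rw [hq.2] at e1
          rw [hq'.2] at e2
          rw [abs_le]
          constructor <;> linarith [e1.1, e1.2, e2.1, e2.2]
      · have := card_le_of_diam (ℓ := 2 * (δ + D)) hr0 (by positivity)
          (((Z ×ˢ Z').filter (fun j => |j.1 + g * j.2 + k - (w0 + g * a0 + k)| < δ)).image
            Prod.snd) ?_ ?_
        · refine this.trans ?_
          have : 2 * (δ + D) / r ≤ 2 * (1 + d) := by
            rw [div_le_iff₀ hr0]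
            nlinarith
          linarith
        · intro x hx y hy
          simp only [Finset.mem_image, Finset.mem_filter, Finset.mem_product] at hx hy
          obtain ⟨q, hq, rfl⟩ := hx
          obtain ⟨q', hq', rfl⟩ := hy
          exact hinj' _ hq.1.2 _ hq'.1.2
        · intro x hx y hy
          rw [Finset.mem_image] at hx hy
          obtain ⟨q, hq, rfl⟩ := hx
          obtain ⟨q', hq', rfl⟩ := hy
          have e1 := abs_le.1 (ha q hq)
          have e2 := abs_le.1 (ha q' hq')
          rw [abs_le]
          constructor <;> linarith [e1.1, e1.2, e2.1, e2.2]
  rw [Finset.card_product] at h1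
  exact_mod_cast h1

/-! ### Sums of differences of products, and regular sets -/

/-- The set `AA - AA`. -/
def mulDiff (A : Set ℝ) : Set ℝ := {z | ∃ a ∈ A, ∃ b ∈ A, ∃ c ∈ A, ∃ d ∈ A, z = a * b - c * d}

/-- The `k`-fold sumset of `AA - AA`. -/
def mulDiffSum (A : Set ℝ) : ℕ → Set ℝ
  | 0 => {0}
  | k + 1 => {z | ∃ x ∈ mulDiffSum A k, ∃ t ∈ mulDiff A, z = x + t}

lemma zero_mem_mulDiff {A : Set ℝ} (h : A.Nonempty) : (0 : ℝ) ∈ mulDiff A := by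
  obtain ⟨a, ha⟩ := h
  exact ⟨a, ha, a, ha, a, ha, a, ha, by ring⟩

lemma mulDiffSum_succ {A : Set ℝ} {k : ℕ} {x t : ℝ} (hx : x ∈ mulDiffSum A k)
    (ht : t ∈ mulDiff A) : x + t ∈ mulDiffSum A (k + 1) := ⟨x, hx, t, ht, rfl⟩

lemma mulDiffSum_add {A : Set ℝ} {j k : ℕ} {x y : ℝ} (hx : x ∈ mulDiffSum A j)
    (hy : y ∈ mulDiffSum A k) : x + y ∈ mulDiffSum A (j + k) := by
  induction k generalizing y with
  | zero => 
    have : y = 0 := hy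
    simpa [this] using hx
  | succ k ih =>
    obtain ⟨z, hz, t, ht, rfl⟩ := hy
    exact ⟨x + z, ih hz, t, ht, by ring⟩

lemma mulDiff_sub_one {A : Set ℝ} {t : ℝ} (ht : t ∈ mulDiff A) : t ∈ mulDiffSum A 1 :=
  ⟨0, rfl, t, ht, by ring⟩

lemma zero_mem_mulDiffSum {A : Set ℝ} (h : A.Nonempty) (k : ℕ) : (0 : ℝ) ∈ mulDiffSum A k := by
  induction k with
  | zero => rfl
  | succ k ih => exact ⟨0, ih, 0, zero_mem_mulDiff h, by ring⟩

lemma mulDiffSum_mono {A : Set ℝ} (h : A.Nonempty) {j k : ℕ} (hjk : j ≤ k) {x : ℝ}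
    (hx : x ∈ mulDiffSum A j) : x ∈ mulDiffSum A k := by
  have := mulDiffSum_add hx (zero_mem_mulDiffSum h (k - j))
  rwa [add_zero, Nat.add_sub_cancel' hjk] at this

lemma bdd_of_subset_Icc {A : Set ℝ} {a b : ℝ} (h : A ⊆ Icc a b) : ∃ B, ∀ x ∈ A, |x| ≤ B := by
  refine ⟨max |a| |b|, fun x hx => ?_⟩
  exact abs_le_max_abs_abs (h hx).1 (h hx).2

lemma mulDiffSum_bdd {A : Set ℝ} (h : A ⊆ Icc 1 5) (k : ℕ) :
    ∃ B, ∀ x ∈ mulDiffSum A k, |x| ≤ B := by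
  induction k with
  | zero => exact ⟨0, fun x hx => by have : x = 0 := hx; simp [this]⟩
  | succ k ih =>
    obtain ⟨B, hB⟩ := ih
    refine ⟨B + 24, ?_⟩
    rintro _ ⟨x, hx, t, ⟨a, ha, b, hb, c, hc, d, hd, rfl⟩, rfl⟩
    refine (abs_add_le _ _).trans (add_le_add (hB x hx) ?_)
    obtain ⟨a1, a2⟩ := h ha
    obtain ⟨b1, b2⟩ := h hb
    obtain ⟨c1, c2⟩ := h hc
    obtain ⟨d1, d2⟩ := h hd
    rw [abs_le]
    constructor <;> nlinarith

lemma sub_mul_mem {A : Set ℝ} {a b x : ℝ} (ha : a ∈ A) (hb : b ∈ A) (hx : x ∈ A) :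
    (a - b) * x ∈ mulDiff A := ⟨a, ha, x, hx, b, hb, x, hx, by ring⟩

lemma mul_sub_mem {A : Set ℝ} {a b x : ℝ} (ha : a ∈ A) (hb : b ∈ A) (hx : x ∈ A) :
    x * (a - b) ∈ mulDiff A := ⟨x, hx, a, ha, x, hx, b, hb, by ring⟩

/-- `A` looks `p`-dimensional at all scales between `δ` and `1`, up to losses `L`, and the sums of
five elements of `AA - AA` do not need more than about `δ ^ (-p)` intervals of length `δ`. -/
structure RegularRing (A : Set ℝ) (δ p L : ℝ) : Prop where
  sub : A ⊆ Icc 1 5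
  ne : A.Nonempty
  pos : 0 < δ
  le_one : δ ≤ 1
  p_pos : 0 < p
  p_lt : p < 1
  one_le : 1 ≤ L
  lower : ∀ r, δ ≤ r → r ≤ 1 → r ^ (-p) ≤ L * cn r A
  upper : (cn δ (mulDiffSum A 5) : ℝ) ≤ L * δ ^ (-p)

namespace RegularRing

variable {A : Set ℝ} {δ p L : ℝ}

lemma bdd (h : RegularRing A δ p L) : ∃ B, ∀ x ∈ A, |x| ≤ B := bdd_of_subset_Icc h.sub

lemma diam (h : RegularRing A δ p L) {x y : ℝ} (hx : x ∈ A) (hy : y ∈ A) : |x - y| ≤ 4 := by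
  have := h.sub hx
  have := h.sub hy
  rw [abs_le]
  constructor <;> linarith [this.1, this.2, (h.sub hx).1, (h.sub hx).2]

/-- Local upper bound: a piece of diameter `r` of (a translate of) `4 (AA - AA)` has at most the
covering number of an `r`-ball in a `p`-dimensional regular set. -/
lemma local_bound (h : RegularRing A δ p L) {W : Set ℝ} {v r : ℝ}
    (hW : ∀ w ∈ W, w - v ∈ mulDiffSum A 4) (hr : δ ≤ r)
    (hd : ∀ x ∈ W, ∀ y ∈ W, |x - y| ≤ r) : (cn δ W : ℝ) ≤ 24 * L ^ 2 * (r / δ) ^ p := by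
  have hδ := h.pos
  have hr0 : 0 < r := lt_of_lt_of_le hδ hr
  have hL := h.one_le
  have hp := h.p_pos
  obtain ⟨g, hg⟩ := h.ne
  have hWb : ∃ B, ∀ x ∈ W, |x| ≤ B := by
    obtain ⟨B, hB⟩ := mulDiffSum_bdd h.sub 4
    refine ⟨B + |v|, fun w hw => ?_⟩
    have := abs_add_le (w - v) v
    rw [sub_add_cancel] at this
    linarith [hB _ (hW w hw)]
  have hpow : (r / δ) ^ p = r ^ p * δ ^ (-p) := by
    rw [Real.div_rpow hr0.le hδ.le, Real.rpow_neg hδ.le, div_eq_mul_inv]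
  have hδp : 0 < δ ^ (-p) := Real.rpow_pos_of_pos hδ _
  have hrp : 0 < r ^ p := Real.rpow_pos_of_pos hr0 _
  rw [hpow]
  by_cases hr1 : r ≤ 1
  · have h1 := cn_mul_cn_le (δ := δ) (r := r) (D := r) (d := 1) (g := g) (k := -v - g * g)
      hδ hr hr0.le (by linarith) (h.sub hg).1 hWb h.bdd (mulDiffSum_bdd h.sub 5) hd
      (by
        intro w hw a ha
        have := mulDiffSum_succ (hW w hw) (mul_sub_mem ha hg hg)
        convert this using 1
        ring)
    have h2 := h.lower r hr hr1
    have h3 := h.upper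
    have h4 : r ^ (-p) * r ^ p = 1 := by
      rw [← Real.rpow_add hr0]; simp
    have hc : (0 : ℝ) ≤ cn δ W := Nat.cast_nonneg _
    calc (cn δ W : ℝ) = cn δ W * (r ^ (-p) * r ^ p) := by rw [h4, mul_one]
      _ ≤ cn δ W * ((L * cn r A) * r ^ p) := by gcongr
      _ = L * r ^ p * (cn δ W * cn r A) := by ring
      _ ≤ L * r ^ p * (4 * (2 * 1 + 4) * cn δ (mulDiffSum A 5)) := by gcongr
      _ ≤ L * r ^ p * (4 * (2 * 1 + 4) * (L * δ ^ (-p))) := by gcongr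
      _ = 24 * L ^ 2 * (r ^ p * δ ^ (-p)) := by ring
  · push Not at hr1
    have h1 := cn_comp (r := δ) (r' := δ) (ℓ := δ) hδ hδ hδ.le hWb (mulDiffSum_bdd h.sub 5)
      (fun x => x - v) (fun x hx => mulDiffSum_mono h.ne (by norm_num) (hW x hx))
      (fun x _ y _ hxy => by
        have : x - v - (y - v) = x - y := by ring
        rw [this] at hxy
        exact hxy.le)
    have e2 : 2 * δ / δ + 2 = 4 := by field_simp; norm_num
    rw [e2] at h1
    have h2 := h.upper
    have h3 : 1 ≤ r ^ p := Real.one_le_rpow hr1.le hp.le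
    calc (cn δ W : ℝ) ≤ 4 * (L * δ ^ (-p)) := by linarith
      _ = 4 * (L * 1 * (1 * δ ^ (-p))) := by ring
      _ ≤ 24 * (L * L * (r ^ p * δ ^ (-p))) := by gcongr <;> norm_num
      _ = _ := by ring

/-- Local upper bound for `A` itself. -/
lemma local_card (h : RegularRing A δ p L) (Z : Finset ℝ) (hZ : ∀ z ∈ Z, z ∈ A)
    (hinj : ∀ x ∈ Z, ∀ y ∈ Z, ⌊x / δ⌋ = ⌊y / δ⌋ → x = y) {r : ℝ} (hr : δ ≤ r)
    (hd : ∀ x ∈ Z, ∀ y ∈ Z, |x - y| ≤ r) : (Z.card : ℝ) ≤ 500 * L ^ 2 * (r / δ) ^ p := by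
  have hδ := h.pos
  have hr0 : 0 < r := lt_of_lt_of_le hδ hr
  obtain ⟨g, hg⟩ := h.ne
  obtain ⟨g1, g5⟩ := h.sub hg
  have hWb : ∃ B, ∀ x ∈ (fun x => g * x) '' (Z : Set ℝ), |x| ≤ B := by
    obtain ⟨B, hB⟩ := h.bdd
    refine ⟨g * B, ?_⟩
    rintro _ ⟨x, hx, rfl⟩
    rw [abs_mul, abs_of_pos (by linarith)]
    have := hB x (hZ x hx)
    gcongr
  have h1 := h.local_bound (W := (fun x => g * x) '' (Z : Set ℝ)) (v := g * g) (r := 5 * r)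
    (by
      rintro _ ⟨x, hx, rfl⟩
      apply mulDiffSum_mono h.ne (show 1 ≤ 4 by norm_num)
      apply mulDiff_sub_one
      have := mul_sub_mem (hZ x hx) hg hg
      convert this using 1
      ring)
    (by linarith)
    (by
      rintro _ ⟨x, hx, rfl⟩ _ ⟨y, hy, rfl⟩
      have := hd x hx y hy
      have e : (fun x => g * x) x - (fun x => g * x) y = g * (x - y) := by simp; ring
      rw [e, abs_mul, abs_of_pos (by linarith)]
      gcongr)
  have h2 := cn_comp (r := δ) (r' := δ) (ℓ := δ) hδ hδ hδ.le (X := (Z : Set ℝ))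
    (bdd_mono (fun z hz => hZ z hz) h.bdd) hWb
      (fun x => g * x) (fun x hx => ⟨x, hx, rfl⟩)
      (fun x _ y _ hxy => by
        have : g * x - g * y = g * (x - y) := by ring
        rw [this, abs_mul, abs_of_pos (by linarith)] at hxy
        nlinarith [abs_nonneg (x - y)])
  have e2 : 2 * δ / δ + 2 = 4 := by field_simp; norm_num
  rw [e2] at h2
  rw [card_eq_cn Z hinj]
  have h3 : (5 * r / δ) ^ p ≤ 5 * (r / δ) ^ p := by
    rw [mul_div_assoc, Real.mul_rpow (by norm_num) (by positivity)]
    gcongr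
    calc (5 : ℝ) ^ p ≤ 5 ^ (1 : ℝ) := Real.rpow_le_rpow_of_exponent_le (by norm_num) h.p_lt.le
      _ = 5 := by simp
  have h5 : 0 ≤ L ^ 2 * (r / δ) ^ p := by positivity
  calc (cn δ (Z : Set ℝ) : ℝ) ≤ 4 * (24 * L ^ 2 * (5 * r / δ) ^ p) := by linarith
    _ ≤ 4 * (24 * L ^ 2 * (5 * (r / δ) ^ p)) := by gcongr
    _ ≤ 500 * L ^ 2 * (r / δ) ^ p := by nlinarith

/-- The quotients `(a - b) / (c - d)` with `|c - d| ≥ ρ`. -/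
def quot (A : Set ℝ) (ρ : ℝ) : Set ℝ :=
  {q | ∃ a ∈ A, ∃ b ∈ A, ∃ c ∈ A, ∃ d ∈ A, ρ ≤ |c - d| ∧ q = (a - b) / (c - d)}

/-- The covering number of `A` at the finest scale is at least `δ ^ (-p) / L`. -/
lemma lower_one (h : RegularRing A δ p L) : δ ^ (-p) ≤ L * cn δ A := h.lower δ le_rfl h.le_one

/-- If `n / (2 e)` were far from all quotients, then `(x, y) ↦ 2 e x + n y` would be nearly
injective on pairs with `ρ`-separated second coordinates. Its image lies in a ball of radius
comparable to `|e|`, and the local bound for `4 (AA - AA)` compensates the contraction by `e`. -/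
lemma gap (h : RegularRing A δ p L) {ρ : ℝ} (hρ : δ ≤ ρ)
    (hnum : 2 * 10 ^ 9 * L ^ 8 * ρ ^ p < 1) {e n : ℝ} (heρ : ρ ≤ |e|) (he4 : |e| ≤ 4)
    (he : ∀ x ∈ A, e * x ∈ mulDiff A) (hn : ∀ y ∈ A, n * y ∈ mulDiffSum A 2)
    (hne : |n| ≤ 4 * |e|) :
    ∃ q ∈ quot A ρ, |q - n / (2 * e)| ≤ δ / ρ ^ 2 := by
  classical
  by_contra hcon
  push Not at hcon
  have hδ := h.pos
  have hL := h.one_le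
  have hp := h.p_pos
  have hρ0 : 0 < ρ := lt_of_lt_of_le hδ hρ
  have he0 : 0 < |e| := lt_of_lt_of_le hρ0 heρ
  have hene : e ≠ 0 := abs_pos.1 he0
  have hsep : ∀ x ∈ A, ∀ y ∈ A, ∀ x1 ∈ A, ∀ y1 ∈ A,
      |2 * e * x + n * y - (2 * e * x1 + n * y1)| < δ → |y - y1| < ρ := by
    intro x hx y hy x1 hx1 y1 hy1 hlt
    by_contra hy'
    push Not at hy'
    rw [abs_sub_comm] at hy'
    have hyne : y1 - y ≠ 0 := by
      intro h0
      rw [h0, abs_zero] at hy'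
      linarith
    have h1 := hcon ((x - x1) / (y1 - y)) ⟨x, hx, x1, hx1, y1, hy1, y, hy, hy', rfl⟩
    have h2 : (x - x1) / (y1 - y) - n / (2 * e) =
        (2 * e * x + n * y - (2 * e * x1 + n * y1)) / (2 * e * (y1 - y)) := by
      field_simp
      ring
    rw [h2, abs_div, abs_mul, abs_mul, abs_two] at h1
    have h3 : ρ ^ 2 ≤ 2 * |e| * |y1 - y| := by nlinarith
    have h4 : |2 * e * x + n * y - (2 * e * x1 + n * y1)| / (2 * |e| * |y1 - y|) ≤ δ / ρ ^ 2 := by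
      gcongr
    linarith
  obtain ⟨Z, hZ, hc, hinj⟩ := exists_section hδ h.bdd
  set W : Set ℝ := {w | ∃ x ∈ A, ∃ y ∈ A, w = 2 * e * x + n * y} with hWdef
  have hW4 : ∀ w ∈ W, w ∈ mulDiffSum A 4 := by
    rintro w ⟨x, hx, y, hy, rfl⟩
    have h1 := mulDiffSum_add (mulDiffSum_add (mulDiff_sub_one (he x hx))
      (mulDiff_sub_one (he x hx))) (hn y hy)
    convert h1 using 1
    ring
  have hlb := h.local_bound (W := W) (v := 0) (r := 24 * |e|)
    (fun w hw => by rw [sub_zero]; exact hW4 w hw) (by linarith)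
    (by
      rintro _ ⟨x, hx, y, hy, rfl⟩ _ ⟨x1, hx1, y1, hy1, rfl⟩
      have e1 : 2 * e * x + n * y - (2 * e * x1 + n * y1) = 2 * e * (x - x1) + n * (y - y1) := by
        ring
      rw [e1]
      refine (abs_add_le _ _).trans ?_
      rw [abs_mul, abs_mul, abs_mul, abs_two]
      have d1 := h.diam hx hx1
      have d2 := h.diam hy hy1
      calc 2 * |e| * |x - x1| + |n| * |y - y1| ≤ 2 * |e| * 4 + 4 * |e| * 4 := by gcongr
        _ = 24 * |e| := by ring)
  have hcard := card_le_fiber_mul_cn (Z ×ˢ Z) (fun q => 2 * e * q.1 + n * q.2) hδ (Y := W)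
    (m := (500 * L ^ 2 * (4 * δ / |e| / δ) ^ p) * (500 * L ^ 2 * (2 * ρ / δ) ^ p))
    (bdd_mono hW4 (mulDiffSum_bdd h.sub 4)) (by positivity)
    (by
      intro q hq
      rw [Finset.mem_product] at hq
      exact ⟨_, hZ _ hq.1, _, hZ _ hq.2, rfl⟩)
    (by
      rintro ⟨x1, y1⟩ hq1
      rw [Finset.mem_product] at hq1
      apply card_le_slices _ (by positivity)
      · intro b
        have hfst := h.local_card (r := 4 * δ / |e|) (((((Z ×ˢ Z).filter fun j : ℝ × ℝ =>
            |2 * e * j.1 + n * j.2 - (2 * e * x1 + n * y1)| < δ).filter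
            fun q => q.2 = b)).image Prod.fst) ?_ ?_ ?_ ?_
        · rw [Finset.card_image_of_injOn] at hfst
          · exact hfst
          · intro x hx y hy hxy
            have hx' := (Finset.mem_filter.1 hx).2
            have hy' := (Finset.mem_filter.1 hy).2
            exact Prod.ext hxy (hx'.trans hy'.symm)
        · intro z hz
          simp only [Finset.mem_image, Finset.mem_filter, Finset.mem_product] at hz
          obtain ⟨q, hq, rfl⟩ := hz
          exact hZ _ hq.1.1.1
        · intro x hx y hy
          simp only [Finset.mem_image, Finset.mem_filter, Finset.mem_product] at hx hy
          obtain ⟨q, hq, rfl⟩ := hx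
          obtain ⟨q', hq', rfl⟩ := hy
          exact hinj _ hq.1.1.1 _ hq'.1.1.1
        · rw [le_div_iff₀ he0]
          nlinarith
        · intro x hx y hy
          simp only [Finset.mem_image, Finset.mem_filter, Finset.mem_product] at hx hy
          obtain ⟨q, hq, rfl⟩ := hx
          obtain ⟨q', hq', rfl⟩ := hy
          have e1 := abs_lt.1 hq.1.2
          have e2 := abs_lt.1 hq'.1.2
          rw [hq.2] at e1
          rw [hq'.2] at e2
          have e3 : |e * (q.1 - q'.1)| ≤ 4 * δ := by
            rw [abs_le]
            constructor <;> linarith [e1.1, e1.2, e2.1, e2.2]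
          rw [abs_mul] at e3
          rw [le_div_iff₀ he0]
          linarith
      · apply h.local_card
        · intro z hz
          simp only [Finset.mem_image, Finset.mem_filter, Finset.mem_product] at hz
          obtain ⟨q, hq, rfl⟩ := hz
          exact hZ _ hq.1.2
        · intro x hx y hy
          simp only [Finset.mem_image, Finset.mem_filter, Finset.mem_product] at hx hy
          obtain ⟨q, hq, rfl⟩ := hx
          obtain ⟨q', hq', rfl⟩ := hy
          exact hinj _ hq.1.2 _ hq'.1.2
        · linarith
        · intro x hx y hy
          simp only [Finset.mem_image, Finset.mem_filter, Finset.mem_product] at hx hy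
          obtain ⟨q, hq, rfl⟩ := hx
          obtain ⟨q', hq', rfl⟩ := hy
          have e1 := abs_lt.1 (hsep _ (hZ _ hq.1.1) _ (hZ _ hq.1.2) _ (hZ _ hq1.1) _ (hZ _ hq1.2)
            hq.2)
          have e2 := abs_lt.1 (hsep _ (hZ _ hq'.1.1) _ (hZ _ hq'.1.2) _ (hZ _ hq1.1) _
            (hZ _ hq1.2) hq'.2)
          rw [abs_le]
          constructor <;> linarith [e1.1, e1.2, e2.1, e2.2])
  rw [Finset.card_product, hc] at hcard
  push_cast at hcard
  have hN := h.lower_one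
  have hδp : 0 < δ ^ (-p) := Real.rpow_pos_of_pos hδ _
  have hcn : (0 : ℝ) ≤ cn δ A := Nat.cast_nonneg _
  have hprod : (4 * δ / |e| / δ) ^ p * (2 * ρ / δ) ^ p * (24 * |e| / δ) ^ p ≤
      192 * (ρ ^ p * (δ ^ (-p)) ^ 2) := by
    have e1 : (4 * δ / |e| / δ) * (2 * ρ / δ) * (24 * |e| / δ) = 192 * (ρ * (δ⁻¹) ^ 2) := by
      field_simp
      ring
    rw [← Real.mul_rpow (by positivity) (by positivity), ← Real.mul_rpow (by positivity)
      (by positivity), e1, Real.mul_rpow (by norm_num) (by positivity),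
      Real.mul_rpow (by positivity) (by positivity), Real.rpow_neg hδ.le, ← Real.inv_rpow hδ.le,
      ← Real.rpow_natCast, ← Real.rpow_natCast, ← Real.rpow_mul (by positivity),
      ← Real.rpow_mul (by positivity), mul_comm p]
    gcongr
    calc (192 : ℝ) ^ p ≤ 192 ^ (1 : ℝ) :=
        Real.rpow_le_rpow_of_exponent_le (by norm_num) h.p_lt.le
      _ = 192 := by simp
  have hfin : (δ ^ (-p)) ^ 2 ≤ 2 * 10 ^ 9 * L ^ 8 * ρ ^ p * (δ ^ (-p)) ^ 2 := by
    calc (δ ^ (-p)) ^ 2 ≤ (L * cn δ A) ^ 2 := by gcongr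
      _ = L ^ 2 * (cn δ A * cn δ A) := by ring
      _ ≤ L ^ 2 * ((500 * L ^ 2 * (4 * δ / |e| / δ) ^ p) * (500 * L ^ 2 * (2 * ρ / δ) ^ p) *
          (24 * L ^ 2 * (24 * |e| / δ) ^ p)) := by
          refine mul_le_mul_of_nonneg_left (hcard.trans ?_) (by positivity)
          exact mul_le_mul_of_nonneg_left hlb (by positivity)
      _ = 6 * 10 ^ 6 * L ^ 8 * ((4 * δ / |e| / δ) ^ p * (2 * ρ / δ) ^ p * (24 * |e| / δ) ^ p) := by
          ring
      _ ≤ 6 * 10 ^ 6 * L ^ 8 * (192 * (ρ ^ p * (δ ^ (-p)) ^ 2)) := by gcongr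
      _ ≤ 2 * 10 ^ 9 * L ^ 8 * ρ ^ p * (δ ^ (-p)) ^ 2 := by
          have : 0 ≤ L ^ 8 * ρ ^ p * (δ ^ (-p)) ^ 2 := by positivity
          nlinarith
  have : 0 < (δ ^ (-p)) ^ 2 := by positivity
  nlinarith

end RegularRing

/-! ### Quotients of differences are dense -/

lemma card_le_mul_of_fibers {α β : Type*} [DecidableEq β] (s : Finset α) (t : Finset β)
    (f : α → β) {m : ℝ} (hm0 : 0 ≤ m) (hf : ∀ a ∈ s, f a ∈ t)
    (hm : ∀ b ∈ t, ((s.filter fun a => f a = b).card : ℝ) ≤ m) : (s.card : ℝ) ≤ m * t.card := by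
  have key : s.card ≤ ⌊m⌋₊ * t.card :=
    Finset.card_le_mul_card_image_of_maps_to hf _ fun b hb => Nat.le_floor (hm b hb)
  calc (s.card : ℝ) ≤ (⌊m⌋₊ : ℝ) * t.card := by exact_mod_cast key
    _ ≤ m * t.card := by gcongr; exact Nat.floor_le hm0

/-- The number of slopes `j δ₂` for which a given line passes within `13 δ₂` of the origin. -/
lemma card_slopes {J : ℕ} {δ₂ u w : ℝ} (hδ : 0 < δ₂) (hJ : J * δ₂ ≤ 1) (hδ1 : δ₂ ≤ 1)
    (hw : |w| ≤ 4) :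
    (((Finset.range J).filter fun j : ℕ => |u + j * δ₂ * w| ≤ 13 * δ₂).card : ℝ) ≤
      34 / max |w| δ₂ := by
  classical
  by_cases hc : |w| ≤ δ₂
  · rw [max_eq_right hc, le_div_iff₀ hδ]
    have h1 : (((Finset.range J).filter fun j : ℕ => |u + j * δ₂ * w| ≤ 13 * δ₂).card : ℝ) ≤ J := by
      have := Finset.card_filter_le (Finset.range J) fun j : ℕ => |u + j * δ₂ * w| ≤ 13 * δ₂
      rw [Finset.card_range] at this
      exact_mod_cast this
    nlinarith
  · push Not at hc
    rw [max_eq_left hc.le]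
    have hw0 : 0 < |w| := hδ.trans hc
    have := card_le_of_diam (r := 1) (ℓ := 26 / |w|) one_pos (by positivity)
      (((Finset.range J).filter fun j : ℕ => |u + j * δ₂ * w| ≤ 13 * δ₂).image
        (fun j : ℕ => (j : ℝ))) ?_ ?_
    · rw [Finset.card_image_of_injective _ Nat.cast_injective, div_one] at this
      refine this.trans ?_
      have h2 : 2 ≤ 8 / |w| := by rw [le_div_iff₀ hw0]; linarith
      have h3 : 34 / |w| = 26 / |w| + 8 / |w| := by ring
      linarith
    · intro x hx y hy hxy
      simp only [Finset.mem_image] at hx hy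
      obtain ⟨i, -, rfl⟩ := hx
      obtain ⟨j, -, rfl⟩ := hy
      simpa using hxy
    · intro x hx y hy
      simp only [Finset.mem_image, Finset.mem_filter] at hx hy
      obtain ⟨i, ⟨-, hi⟩, rfl⟩ := hx
      obtain ⟨j, ⟨-, hj⟩, rfl⟩ := hy
      rw [le_div_iff₀ hw0, ← abs_mul]
      have e1 := abs_le.1 hi
      have e2 := abs_le.1 hj
      have e3 : |δ₂ * (((i : ℝ) - j) * w)| ≤ δ₂ * 26 := by
        rw [abs_le]
        constructor <;> linarith [e1.1, e1.2, e2.1, e2.2]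
      rw [abs_mul, abs_of_pos hδ] at e3
      exact le_of_mul_le_mul_left e3 hδ

namespace RegularRing

variable {A : Set ℝ} {δ p L : ℝ}

lemma quot_zero (h : RegularRing A δ p L) {ρ : ℝ} (hρ : δ ≤ ρ) (hρ1 : ρ ≤ 1)
    (hnum : 2 * 10 ^ 9 * L ^ 8 * ρ ^ p < 1) : (0 : ℝ) ∈ quot A ρ := by
  have hρ0 : 0 < ρ := lt_of_lt_of_le h.pos hρ
  have hL := h.one_le
  obtain ⟨g, hg⟩ := h.ne
  by_contra hcon
  have hd : ∀ x ∈ A, ∀ y ∈ A, |x - y| ≤ ρ := by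
    intro x hx y hy
    by_contra hxy
    push Not at hxy
    exact hcon ⟨g, hg, g, hg, x, hx, y, hy, hxy.le, by simp⟩
  have h1 := cn_le_of_diam hρ0 hρ0.le h.bdd hd
  rw [div_self hρ0.ne'] at h1
  have h2 := h.lower ρ hρ hρ1
  have hρp : 0 < ρ ^ p := Real.rpow_pos_of_pos hρ0 _
  have h4 : ρ ^ (-p) * ρ ^ p = 1 := by
    rw [← Real.rpow_add hρ0]; simp
  have h5 : (1 : ℝ) ≤ 3 * L * ρ ^ p := by
    calc (1 : ℝ) = ρ ^ (-p) * ρ ^ p := h4.symm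
      _ ≤ (L * cn ρ A) * ρ ^ p := by gcongr
      _ ≤ (L * (1 + 2)) * ρ ^ p := by gcongr
      _ = 3 * L * ρ ^ p := by ring
  have h6 : L ≤ L ^ 8 := le_self_pow₀ hL (by norm_num)
  have h7 : 3 * L * ρ ^ p ≤ 2 * 10 ^ 9 * L ^ 8 * ρ ^ p := by
    gcongr
    norm_num
  linarith

/-- The quotients are dense in `[0, 1]`: by `gap` they are almost closed under `q ↦ q / 2` and
`q ↦ (q + 1) / 2`, which generate all dyadic rationals from `0`. -/
lemma density (h : RegularRing A δ p L) {ρ : ℝ} (hρ : δ ≤ ρ) (hρ1 : ρ ≤ 1)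
    (hnum : 2 * 10 ^ 9 * L ^ 8 * ρ ^ p < 1) (h2 : 2 * (δ / ρ ^ 2) ≤ 1) (k : ℕ) :
    ∀ t : ℝ, 0 ≤ t → t ≤ 1 → ∃ q ∈ quot A ρ, |q - t| ≤ (1 / 2) ^ k + 2 * (δ / ρ ^ 2) := by
  have hρ0 : 0 < ρ := lt_of_lt_of_le h.pos hρ
  have hδ1 : 0 < δ / ρ ^ 2 := div_pos h.pos (by positivity)
  induction k with
  | zero =>
    intro t ht0 ht1
    refine ⟨0, h.quot_zero hρ hρ1 hnum, ?_⟩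
    rw [zero_sub, abs_neg, abs_of_nonneg ht0, pow_zero]
    linarith
  | succ k ih =>
    intro t ht0 ht1
    obtain ⟨s, hs, hs0, hs1⟩ : ∃ s : ℝ, (s = 0 ∨ s = 1) ∧ 0 ≤ 2 * t - s ∧ 2 * t - s ≤ 1 := by
      by_cases ht : t ≤ 1 / 2
      · exact ⟨0, Or.inl rfl, by linarith, by linarith⟩
      · exact ⟨1, Or.inr rfl, by linarith, by linarith⟩
    obtain ⟨q, ⟨a, ha, b, hb, c, hc, d, hd, hcd, rfl⟩, hq⟩ := ih (2 * t - s) hs0 hs1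
    have he0 : 0 < |c - d| := lt_of_lt_of_le hρ0 hcd
    have hene : c - d ≠ 0 := abs_pos.1 he0
    have hpow : ((1 : ℝ) / 2) ^ k ≤ 1 := pow_le_one₀ (by norm_num) (by norm_num)
    have hq3 : |(a - b) / (c - d)| ≤ 3 := by
      have e1 := abs_le.1 hq
      rw [abs_le]
      constructor <;> linarith [e1.1, e1.2]
    rw [abs_div, div_le_iff₀ he0] at hq3
    have hs' : |s| ≤ 1 := by rcases hs with rfl | rfl <;> simp
    obtain ⟨q', hq', hq''⟩ := h.gap hρ hnum (e := c - d) (n := (a - b) + s * (c - d)) hcd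
      (h.diam hc hd) (fun x hx => sub_mul_mem hc hd hx)
      (fun y hy => by
        rcases hs with rfl | rfl
        · rw [zero_mul, add_zero]
          exact mulDiffSum_mono h.ne (by norm_num) (mulDiff_sub_one (sub_mul_mem ha hb hy))
        · rw [one_mul, add_mul]
          exact mulDiffSum_succ (mulDiff_sub_one (sub_mul_mem ha hb hy)) (sub_mul_mem hc hd hy))
      (by
        refine (abs_add_le _ _).trans ?_
        rw [abs_mul]
        nlinarith)
    refine ⟨q', hq', ?_⟩
    have e2 : ((a - b) + s * (c - d)) / (2 * (c - d)) = ((a - b) / (c - d) + s) / 2 := by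
      field_simp
    rw [e2] at hq''
    have e1 := abs_le.1 hq
    have e3 := abs_le.1 hq''
    rw [pow_succ, abs_le]
    constructor <;> linarith [e1.1, e1.2, e3.1, e3.2]

lemma dense (h : RegularRing A δ p L) {ρ : ℝ} (hρ : δ ≤ ρ) (hρ1 : ρ ≤ 1)
    (hnum : 2 * 10 ^ 9 * L ^ 8 * ρ ^ p < 1) (h2 : 2 * (δ / ρ ^ 2) ≤ 1)
    (t : ℝ) (ht : 0 ≤ t) (ht1 : t ≤ 1) : ∃ q ∈ quot A ρ, |q - t| ≤ 3 * (δ / ρ ^ 2) := by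
  have hρ0 : 0 < ρ := lt_of_lt_of_le h.pos hρ
  have hδ1 : 0 < δ / ρ ^ 2 := div_pos h.pos (by positivity)
  obtain ⟨k, hk⟩ := exists_pow_lt_of_lt_one hδ1 (show (1 / 2 : ℝ) < 1 by norm_num)
  obtain ⟨q, hq, hqt⟩ := h.density hρ hρ1 hnum h2 k t ht ht1
  exact ⟨q, hq, by linarith⟩

/-- Cauchy-Schwarz: for every slope `t ∈ [0, 1]` the map `(x, y) ↦ x + t y` has many near
collisions on `A × A`, since `t` is close to a quotient `n / e` and `e A + n A` is small. -/
lemma energy_lower (h : RegularRing A δ p L) {ρ : ℝ} (hρ : δ ≤ ρ) (hρ1 : ρ ≤ 1)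
    (hnum : 2 * 10 ^ 9 * L ^ 8 * ρ ^ p < 1) (h2 : 2 * (δ / ρ ^ 2) ≤ 1)
    (t : ℝ) (ht : 0 ≤ t) (ht1 : t ≤ 1) (Z : Finset ℝ) (hZ : ∀ z ∈ Z, z ∈ A) :
    (Z.card : ℝ) ^ 4 ≤ L * δ ^ (-p) * (((Z ×ˢ Z) ×ˢ (Z ×ˢ Z)).filter fun q =>
      |q.1.1 - q.2.1 + t * (q.1.2 - q.2.2)| ≤ 13 * (δ / ρ ^ 2)).card := by
  classical
  have hδ := h.pos
  have hρ0 : 0 < ρ := lt_of_lt_of_le h.pos hρ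
  have hδ1 : 0 < δ / ρ ^ 2 := div_pos h.pos (by positivity)
  obtain ⟨q, ⟨a, ha, b, hb, c, hc, d, hd, hcd, rfl⟩, hq⟩ := h.dense hρ hρ1 hnum h2 t ht ht1
  have he0 : 0 < |c - d| := lt_of_lt_of_le hρ0 hcd
  have hene : c - d ≠ 0 := abs_pos.1 he0
  have h3 := sq_card_le_cn_mul (Z ×ˢ Z) (fun z => (c - d) * z.1 + (a - b) * z.2) hδ
    (mulDiffSum_bdd h.sub 5)
    (by
      intro z hz
      rw [Finset.mem_product] at hz
      exact mulDiffSum_mono h.ne (show 2 ≤ 5 by norm_num)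
        (mulDiffSum_succ (mulDiff_sub_one (sub_mul_mem hc hd (hZ _ hz.1)))
          (sub_mul_mem ha hb (hZ _ hz.2))))
  rw [Finset.card_product] at h3
  push_cast at h3
  have h4 : ((((Z ×ˢ Z) ×ˢ (Z ×ˢ Z)).filter fun q : (ℝ × ℝ) × (ℝ × ℝ) =>
      |(c - d) * q.1.1 + (a - b) * q.1.2 - ((c - d) * q.2.1 + (a - b) * q.2.2)| < δ).card : ℝ) ≤
      (((Z ×ˢ Z) ×ˢ (Z ×ˢ Z)).filter fun q =>
      |q.1.1 - q.2.1 + t * (q.1.2 - q.2.2)| ≤ 13 * (δ / ρ ^ 2)).card := by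
    norm_cast
    apply Finset.card_le_card
    rintro ⟨⟨x, y⟩, ⟨x1, y1⟩⟩ hmem
    rw [Finset.mem_filter] at hmem ⊢
    refine ⟨hmem.1, ?_⟩
    have hm := hmem.2
    have hz := hmem.1
    simp only [Finset.mem_product] at hz
    simp only at hm ⊢
    have e1 : x - x1 + t * (y - y1) =
        ((c - d) * x + (a - b) * y - ((c - d) * x1 + (a - b) * y1)) / (c - d) -
          ((a - b) / (c - d) - t) * (y - y1) := by
      field_simp
      ring
    have hy4 := h.diam (hZ _ hz.1.2) (hZ _ hz.2.2)
    rw [e1]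
    refine (abs_sub _ _).trans ?_
    rw [abs_div, abs_mul]
    have e2 : |(c - d) * x + (a - b) * y - ((c - d) * x1 + (a - b) * y1)| / |c - d| ≤
        δ / ρ ^ 2 := by
      have : ρ ^ 2 ≤ |c - d| := by nlinarith
      gcongr
    have e3 : |(a - b) / (c - d) - t| * |y - y1| ≤ 3 * (δ / ρ ^ 2) * 4 := by gcongr
    linarith
  calc (Z.card : ℝ) ^ 4 = (Z.card * Z.card : ℝ) ^ 2 := by ring
    _ ≤ _ := h3
    _ ≤ _ := by
      have := h.upper
      have := h.one_le
      have : 0 < δ ^ (-p) := Real.rpow_pos_of_pos hδ _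
      gcongr

end RegularRing

/-! ### Near collisions of `x + t y` -/

/-- The inequality that results from the two counts of near collisions. -/
lemma energy_numerics {δ δ₂ β ρ p L N J : ℝ} (hδ : 0 < δ) (hβ0 : 0 < β) (hρ0 : 0 < ρ)
    (hL : 1 ≤ L) (hδ₂ : δ₂ = δ / ρ ^ 2) (hN : δ ^ (-p) ≤ L * N) (hN0 : 0 < N)
    (hJ2 : 1 ≤ 2 * δ₂ * J)
    (hmain : J * N ^ 4 ≤ L * δ ^ (-p) * (480000 * 1000 * L ^ 4 * (δ ^ (-p)) ^ 2 * N ^ 2 *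
      (δ₂ ^ (p - 1) * β ^ p + 2 * β ^ (p - 1)))) :
    1 ≤ 4 * 10 ^ 9 * L ^ 7 * ((β / ρ ^ 2) ^ p + (δ / β) ^ (1 - p) / ρ ^ 2) := by
  have hδ₂0 : 0 < δ₂ := hδ₂ ▸ div_pos hδ (by positivity)
  have hδp : 0 < δ ^ (-p) := Real.rpow_pos_of_pos hδ _
  set q := δ ^ (-p) with hq
  set X := δ₂ ^ (p - 1) * β ^ p + 2 * β ^ (p - 1) with hX
  have hX0 : 0 < X := by positivity
  have hN2 : q ^ 2 ≤ L ^ 2 * N ^ 2 := by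
    rw [← mul_pow]
    gcongr
  have hmain2 : (J : ℝ) * N ^ 2 ≤ L ^ 5 * q ^ 3 * (480000 * 1000 * X) := by
    have : (J : ℝ) * N ^ 2 * N ^ 2 ≤ L ^ 5 * q ^ 3 * (480000 * 1000 * X) * N ^ 2 := by
      calc (J : ℝ) * N ^ 2 * N ^ 2 = J * N ^ 4 := by ring
        _ ≤ _ := hmain
        _ = _ := by ring
    exact le_of_mul_le_mul_right this (by positivity)
  have h5 : q ^ 2 ≤ 4 * 10 ^ 9 * L ^ 7 * q ^ 3 * (δ₂ * X / 4) := by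
    calc q ^ 2 ≤ L ^ 2 * N ^ 2 := hN2
      _ = 1 * (L ^ 2 * N ^ 2) := by ring
      _ ≤ (2 * δ₂ * J) * (L ^ 2 * N ^ 2) := by gcongr
      _ = 2 * δ₂ * L ^ 2 * (J * N ^ 2) := by ring
      _ ≤ 2 * δ₂ * L ^ 2 * (L ^ 5 * q ^ 3 * (480000 * 1000 * X)) := by gcongr
      _ = 480000 * 2000 * (L ^ 7 * q ^ 3 * δ₂ * X) := by ring
      _ ≤ 10 ^ 9 * (L ^ 7 * q ^ 3 * δ₂ * X) := by gcongr; norm_num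
      _ = _ := by ring
  have h6 : q * (δ₂ * X / 4) ≤ (β / ρ ^ 2) ^ p + (δ / β) ^ (1 - p) / ρ ^ 2 := by
    have e1 : q * (δ₂ ^ (p - 1) * δ₂) * β ^ p = (β / ρ ^ 2) ^ p := by
      rw [Real.rpow_sub_one hδ₂0.ne', div_mul_cancel₀ _ hδ₂0.ne', hq, Real.rpow_neg hδ.le,
        ← Real.inv_rpow hδ.le, ← Real.mul_rpow (by positivity) (by positivity),
        ← Real.mul_rpow (by positivity) (by positivity)]
      congr 1
      rw [hδ₂]
      field_simp
    have e2 : q * β ^ (p - 1) * δ₂ = (δ / β) ^ (1 - p) / ρ ^ 2 := by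
      rw [Real.div_rpow hδ.le hβ0.le, hq, hδ₂, show p - 1 = -(1 - p) by ring,
        Real.rpow_neg hβ0.le, Real.rpow_neg hδ.le, Real.rpow_sub hδ, Real.rpow_one]
      field_simp
    have e3 : q * (δ₂ * X / 4) = (q * (δ₂ ^ (p - 1) * δ₂) * β ^ p) / 4 +
        (q * β ^ (p - 1) * δ₂) / 2 := by
      rw [hX]
      ring
    rw [e3, e1, e2]
    have : 0 ≤ (β / ρ ^ 2) ^ p := by positivity
    have : 0 ≤ (δ / β) ^ (1 - p) / ρ ^ 2 := by positivity
    linarith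
  have h7 : q ^ 2 * 1 ≤ q ^ 2 * (4 * 10 ^ 9 * L ^ 7 * (q * (δ₂ * X / 4))) := by
    rw [mul_one]
    refine h5.trans (le_of_eq ?_)
    ring
  have h8 := le_of_mul_le_mul_left h7 (by positivity)
  refine h8.trans ?_
  gcongr

namespace RegularRing

variable {A : Set ℝ} {δ p L : ℝ}

/-- Near collisions over all slopes `j δ₂` with three of the four points prescribed: the fourth
point lies in an interval and, once it is chosen, the slope lies in an interval. -/
lemma fiber_upper (h : RegularRing A δ p L) {δ₂ : ℝ} (hδ₂ : δ ≤ δ₂) (hδ₂1 : δ₂ ≤ 1) {J : ℕ}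
    (hJ : J * δ₂ ≤ 1) (Z : Finset ℝ) (hZ : ∀ z ∈ Z, z ∈ A)
    (hinj : ∀ x ∈ Z, ∀ y ∈ Z, ⌊x / δ⌋ = ⌊y / δ⌋ → x = y)
    (T : Finset (ℕ × ((ℝ × ℝ) × (ℝ × ℝ))))
    (hT : ∀ q ∈ T, q.1 < J ∧ q.2.1.1 ∈ Z ∧ q.2.1.2 ∈ Z ∧ q.2.2.1 ∈ Z ∧ q.2.2.2 ∈ Z ∧
      |q.2.1.1 - q.2.2.1 + q.1 * δ₂ * (q.2.1.2 - q.2.2.2)| ≤ 13 * δ₂)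
    {x y y₁ m : ℝ} (hy : y ∈ Z) (hy₁ : y₁ ∈ Z) (hm : 0 < m) (hmle : m ≤ max |y - y₁| δ₂) :
    ((T.filter fun q => (q.2.1.1, (q.2.1.2, q.2.2.2)) = (x, (y, y₁))).card : ℝ) ≤
      480000 * L ^ 2 * m ^ (p - 1) * δ ^ (-p) := by
  classical
  have hδ := h.pos
  have hδ₂0 : 0 < δ₂ := hδ.trans_le hδ₂
  have hL := h.one_le
  have hp := h.p_pos
  have hp1 := h.p_lt
  set M := max |y - y₁| δ₂ with hM
  have hM0 : 0 < M := lt_of_lt_of_le hm hmle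
  have hM1 : |y - y₁| ≤ M := le_max_left _ _
  have hM2 : δ₂ ≤ M := le_max_right _ _
  set t := Z.filter fun x₁ => |x - x₁| ≤ 14 * M with ht
  have htcard : (t.card : ℝ) ≤ 500 * L ^ 2 * (28 * M / δ) ^ p := by
    apply h.local_card
    · intro z hz
      exact hZ z (Finset.mem_filter.1 hz).1
    · intro a ha b hb
      exact hinj a (Finset.mem_filter.1 ha).1 b (Finset.mem_filter.1 hb).1
    · linarith
    · intro a ha b hb
      have e1 := abs_le.1 (Finset.mem_filter.1 ha).2
      have e2 := abs_le.1 (Finset.mem_filter.1 hb).2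
      rw [abs_le]
      constructor <;> linarith [e1.1, e1.2, e2.1, e2.2]
  have hmain := card_le_mul_of_fibers
    (T.filter fun q => (q.2.1.1, (q.2.1.2, q.2.2.2)) = (x, (y, y₁))) t (fun q => q.2.2.1)
    (m := 34 / M) (by positivity)
    (by
      intro q hq
      rw [Finset.mem_filter] at hq
      obtain ⟨hqT, hqe⟩ := hq
      obtain ⟨h1, h2, h3, h4, h5, h6⟩ := hT q hqT
      simp only [Prod.mk.injEq] at hqe
      obtain ⟨rfl, rfl, rfl⟩ := hqe
      rw [ht, Finset.mem_filter]
      refine ⟨h4, ?_⟩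
      have h7 : |(q.1 : ℝ) * δ₂ * (q.2.1.2 - q.2.2.2)| ≤ M := by
        have : (q.1 : ℝ) ≤ J := by exact_mod_cast h1.le
        rw [abs_mul, abs_of_nonneg (by positivity)]
        calc (q.1 : ℝ) * δ₂ * |q.2.1.2 - q.2.2.2| ≤ 1 * |q.2.1.2 - q.2.2.2| := by
              gcongr
              exact le_trans (by gcongr) hJ
          _ ≤ M := by rw [one_mul]; exact hM1
      have e1 := abs_le.1 h6
      have e2 := abs_le.1 h7
      rw [abs_le]
      constructor <;> linarith [e1.1, e1.2, e2.1, e2.2])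
    (by
      intro x₁ _
      refine le_trans ?_ (card_slopes (J := J) (u := x - x₁) (w := y - y₁) hδ₂0 hJ hδ₂1
        (h.diam (hZ y hy) (hZ y₁ hy₁)))
      norm_cast
      apply Finset.card_le_card_of_injOn (fun q => q.1)
      · intro q hq
        rw [Finset.mem_coe, Finset.mem_filter, Finset.mem_filter] at hq
        obtain ⟨⟨hqT, hqe⟩, hq1⟩ := hq
        obtain ⟨h1, h2, h3, h4, h5, h6⟩ := hT q hqT
        simp only [Prod.mk.injEq] at hqe
        obtain ⟨rfl, rfl, rfl⟩ := hqe
        rw [Finset.mem_coe, Finset.mem_filter, Finset.mem_range]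
        rw [← hq1]
        exact ⟨h1, h6⟩
      · intro q hq q' hq' hqq
        rw [Finset.mem_coe, Finset.mem_filter, Finset.mem_filter] at hq hq'
        obtain ⟨⟨-, hqe⟩, hq1⟩ := hq
        obtain ⟨⟨-, hqe'⟩, hq1'⟩ := hq'
        simp only [Prod.mk.injEq] at hqe hqe'
        obtain ⟨rfl, rfl, rfl⟩ := hqe
        obtain ⟨e1, e2, e3⟩ := hqe'
        exact Prod.ext hqq (Prod.ext (Prod.ext e1.symm e2.symm)
          (Prod.ext (hq1.trans hq1'.symm) e3.symm)))
  have hδp : 0 < δ ^ (-p) := Real.rpow_pos_of_pos hδ _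
  have e28 : (28 : ℝ) ^ p ≤ 28 := by
    calc (28 : ℝ) ^ p ≤ 28 ^ (1 : ℝ) := Real.rpow_le_rpow_of_exponent_le (by norm_num) hp1.le
      _ = 28 := by simp
  have ediv : (28 * M / δ) ^ p = 28 ^ p * M ^ p * δ ^ (-p) := by
    rw [Real.div_rpow (by positivity) hδ.le, Real.mul_rpow (by norm_num) hM0.le,
      Real.rpow_neg hδ.le, div_eq_mul_inv]
  have eM : M ^ p = M * M ^ (p - 1) := by
    rw [Real.rpow_sub_one hM0.ne']
    field_simp
  have hmono : M ^ (p - 1) ≤ m ^ (p - 1) :=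
    Real.rpow_le_rpow_of_nonpos hm hmle (by linarith)
  calc _ ≤ 34 / M * t.card := hmain
    _ ≤ 34 / M * (500 * L ^ 2 * (28 ^ p * M ^ p * δ ^ (-p))) := by
        rw [← ediv]
        gcongr
    _ = 34 * 500 * L ^ 2 * 28 ^ p * M ^ (p - 1) * δ ^ (-p) := by
        rw [eM]
        field_simp
    _ ≤ 34 * 500 * L ^ 2 * 28 * m ^ (p - 1) * δ ^ (-p) := by gcongr
    _ = 476000 * (L ^ 2 * m ^ (p - 1) * δ ^ (-p)) := by ring
    _ ≤ 480000 * (L ^ 2 * m ^ (p - 1) * δ ^ (-p)) := by gcongr; norm_num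
    _ = 480000 * L ^ 2 * m ^ (p - 1) * δ ^ (-p) := by ring

set_option maxHeartbeats 1000000 in
/-- Comparing the lower bound for the number of near collisions with the upper bound obtained by
counting slopes. Pairs of second coordinates closer than `β` and farther than `β` are treated
separately; one gains in the first case because they are few, and in the second because they see
few slopes, which is where `p < 1` enters. -/
lemma energy (h : RegularRing A δ p L) {ρ β : ℝ} (hρ : δ ≤ ρ) (hρ1 : ρ ≤ 1)
    (hnum : 2 * 10 ^ 9 * L ^ 8 * ρ ^ p < 1) (h2 : 2 * (δ / ρ ^ 2) ≤ 1) (hβ : δ ≤ β) :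
    1 ≤ 4 * 10 ^ 9 * L ^ 7 * ((β / ρ ^ 2) ^ p + (δ / β) ^ (1 - p) / ρ ^ 2) := by
  classical
  have hδ := h.pos
  have hL := h.one_le
  have hp := h.p_pos
  have hp1 := h.p_lt
  have hρ0 : 0 < ρ := lt_of_lt_of_le h.pos hρ
  have hβ0 : 0 < β := lt_of_lt_of_le h.pos hβ
  set δ₂ := δ / ρ ^ 2 with hδ₂
  have hδ₂0 : 0 < δ₂ := div_pos h.pos (by positivity)
  have hδδ₂ : δ ≤ δ₂ := by
    rw [hδ₂, le_div_iff₀ (by positivity)]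
    have : ρ ^ 2 ≤ 1 := pow_le_one₀ hρ0.le hρ1
    nlinarith
  have hδ₂1 : δ₂ ≤ 1 := by linarith
  obtain ⟨Z, hZ, hc, hinj⟩ := exists_section hδ h.bdd
  set J := ⌊1 / δ₂⌋₊ with hJdef
  have hJ1 : J * δ₂ ≤ 1 := by
    have := Nat.floor_le (show 0 ≤ 1 / δ₂ by positivity)
    rw [← hJdef, le_div_iff₀ hδ₂0] at this
    exact this
  have hJ2 : 1 ≤ 2 * δ₂ * J := by
    have := Nat.lt_floor_add_one (1 / δ₂)
    rw [← hJdef, div_lt_iff₀ hδ₂0] at this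
    linarith
  set T := ((Finset.range J) ×ˢ ((Z ×ˢ Z) ×ˢ (Z ×ˢ Z))).filter fun q =>
    |q.2.1.1 - q.2.2.1 + q.1 * δ₂ * (q.2.1.2 - q.2.2.2)| ≤ 13 * δ₂ with hTdef
  have hT : ∀ q ∈ T, q.1 < J ∧ q.2.1.1 ∈ Z ∧ q.2.1.2 ∈ Z ∧ q.2.2.1 ∈ Z ∧ q.2.2.2 ∈ Z ∧
      |q.2.1.1 - q.2.2.1 + q.1 * δ₂ * (q.2.1.2 - q.2.2.2)| ≤ 13 * δ₂ := by
    intro q hq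
    simp only [hTdef, Finset.mem_filter, Finset.mem_product, Finset.mem_range] at hq
    tauto
  have hδp : 0 < δ ^ (-p) := Real.rpow_pos_of_pos hδ _
  have hlow : (J : ℝ) * (Z.card : ℝ) ^ 4 ≤ L * δ ^ (-p) * T.card := by
    have e1 : (T.card : ℝ) = ∑ j ∈ Finset.range J,
        ((((Z ×ˢ Z) ×ˢ (Z ×ˢ Z)).filter fun q =>
          |q.1.1 - q.2.1 + (j * δ₂) * (q.1.2 - q.2.2)| ≤ 13 * δ₂).card : ℝ) := by
      rw [hTdef]
      simp only [Finset.card_filter, Finset.sum_product]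
      push_cast
      rfl
    rw [e1, Finset.mul_sum]
    calc (J : ℝ) * (Z.card : ℝ) ^ 4 = ∑ j ∈ Finset.range J, (Z.card : ℝ) ^ 4 := by
          rw [Finset.sum_const, Finset.card_range, nsmul_eq_mul]
      _ ≤ _ := by
        apply Finset.sum_le_sum
        intro j hj
        rw [Finset.mem_range] at hj
        have hj' : (j : ℝ) ≤ J := by exact_mod_cast hj.le
        exact h.energy_lower hρ hρ1 hnum h2 (j * δ₂) (by positivity)
          (le_trans (by gcongr) hJ1) Z hZ
  set Pn := (Z ×ˢ Z).filter fun q => |q.1 - q.2| < β with hPn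
  have hPncard : (Pn.card : ℝ) ≤ 1000 * L ^ 2 * β ^ p * δ ^ (-p) * Z.card := by
    have e1 : (2 * β / δ) ^ p ≤ 2 * (β ^ p * δ ^ (-p)) := by
      rw [Real.div_rpow (by positivity) hδ.le, Real.mul_rpow (by norm_num) hβ0.le,
        Real.rpow_neg hδ.le, div_eq_mul_inv, mul_assoc]
      gcongr
      calc (2 : ℝ) ^ p ≤ 2 ^ (1 : ℝ) := Real.rpow_le_rpow_of_exponent_le (by norm_num) hp1.le
        _ = 2 := by simp
    have e2 : (Pn.card : ℝ) ≤ (500 * L ^ 2 * (2 * β / δ) ^ p) * Z.card := by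
      apply card_le_mul_of_fibers Pn Z Prod.snd (by positivity)
      · intro q hq
        rw [hPn, Finset.mem_filter, Finset.mem_product] at hq
        exact hq.1.2
      · intro b _
        have := h.local_card (r := 2 * β) ((Pn.filter fun q => q.2 = b).image Prod.fst)
          ?_ ?_ (by linarith) ?_
        · rw [Finset.card_image_of_injOn] at this
          · exact this
          · intro u hu v hv huv
            have hu' := (Finset.mem_filter.1 hu).2
            have hv' := (Finset.mem_filter.1 hv).2
            exact Prod.ext huv (hu'.trans hv'.symm)
        · intro z hz
          simp only [hPn, Finset.mem_image, Finset.mem_filter, Finset.mem_product] at hz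
          obtain ⟨q, hq, rfl⟩ := hz
          exact hZ _ hq.1.1.1
        · intro u hu v hv
          simp only [hPn, Finset.mem_image, Finset.mem_filter, Finset.mem_product] at hu hv
          obtain ⟨q, hq, rfl⟩ := hu
          obtain ⟨q', hq', rfl⟩ := hv
          exact hinj _ hq.1.1.1 _ hq'.1.1.1
        · intro u hu v hv
          simp only [hPn, Finset.mem_image, Finset.mem_filter, Finset.mem_product] at hu hv
          obtain ⟨q, hq, rfl⟩ := hu
          obtain ⟨q', hq', rfl⟩ := hv
          have f1 := abs_lt.1 hq.1.2
          have f2 := abs_lt.1 hq'.1.2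
          rw [hq.2] at f1
          rw [hq'.2] at f2
          rw [abs_le]
          constructor <;> linarith [f1.1, f1.2, f2.1, f2.2]
    calc (Pn.card : ℝ) ≤ (500 * L ^ 2 * (2 * β / δ) ^ p) * Z.card := e2
      _ ≤ (500 * L ^ 2 * (2 * (β ^ p * δ ^ (-p)))) * Z.card := by gcongr
      _ = _ := by ring
  have hNcard : (Z.card : ℝ) ≤ 2000 * L ^ 2 * δ ^ (-p) := by
    have e1 := h.local_card (r := 4) Z hZ hinj (by linarith [h.le_one])
      (fun x hx y hy => h.diam (hZ x hx) (hZ y hy))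
    have e2 : (4 / δ) ^ p ≤ 4 * δ ^ (-p) := by
      rw [Real.div_rpow (by positivity) hδ.le, Real.rpow_neg hδ.le, div_eq_mul_inv]
      gcongr
      calc (4 : ℝ) ^ p ≤ 4 ^ (1 : ℝ) := Real.rpow_le_rpow_of_exponent_le (by norm_num) hp1.le
        _ = 4 := by simp
    calc (Z.card : ℝ) ≤ 500 * L ^ 2 * (4 / δ) ^ p := e1
      _ ≤ 500 * L ^ 2 * (4 * δ ^ (-p)) := by gcongr
      _ = _ := by ring
  have hnear : ((T.filter fun q => |q.2.1.2 - q.2.2.2| < β).card : ℝ) ≤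
      480000 * L ^ 2 * δ₂ ^ (p - 1) * δ ^ (-p) *
        (Z.card * (1000 * L ^ 2 * β ^ p * δ ^ (-p) * Z.card)) := by
    have e1 := card_le_mul_of_fibers (T.filter fun q => |q.2.1.2 - q.2.2.2| < β)
      (Z ×ˢ Pn) (fun q => (q.2.1.1, (q.2.1.2, q.2.2.2)))
      (m := 480000 * L ^ 2 * δ₂ ^ (p - 1) * δ ^ (-p)) (by positivity)
      (by
        intro q hq
        rw [Finset.mem_filter] at hq
        have := hT q hq.1
        simp only [hPn, Finset.mem_filter, Finset.mem_product]
        exact ⟨this.2.1, ⟨this.2.2.1, this.2.2.2.2.1⟩, hq.2⟩)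
      (by
        rintro ⟨x, y, y₁⟩ hb
        simp only [hPn, Finset.mem_filter, Finset.mem_product] at hb
        exact h.fiber_upper hδδ₂ hδ₂1 hJ1 Z hZ hinj _
          (fun q hq => hT q (Finset.mem_filter.1 hq).1) hb.2.1.1 hb.2.1.2 hδ₂0 (le_max_right _ _))
    refine e1.trans ?_
    rw [Finset.card_product, Nat.cast_mul]
    gcongr
  have hfar : ((T.filter fun q => ¬ |q.2.1.2 - q.2.2.2| < β).card : ℝ) ≤
      480000 * L ^ 2 * β ^ (p - 1) * δ ^ (-p) *
        (Z.card * (2000 * L ^ 2 * δ ^ (-p) * Z.card)) := by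
    have e1 := card_le_mul_of_fibers (T.filter fun q => ¬ |q.2.1.2 - q.2.2.2| < β)
      (Z ×ˢ ((Z ×ˢ Z).filter fun q => ¬ |q.1 - q.2| < β)) (fun q => (q.2.1.1, (q.2.1.2, q.2.2.2)))
      (m := 480000 * L ^ 2 * β ^ (p - 1) * δ ^ (-p)) (by positivity)
      (by
        intro q hq
        rw [Finset.mem_filter] at hq
        have := hT q hq.1
        simp only [Finset.mem_filter, Finset.mem_product]
        exact ⟨this.2.1, ⟨this.2.2.1, this.2.2.2.2.1⟩, hq.2⟩)
      (by
        rintro ⟨x, y, y₁⟩ hb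
        simp only [Finset.mem_filter, Finset.mem_product] at hb
        exact h.fiber_upper hδδ₂ hδ₂1 hJ1 Z hZ hinj _
          (fun q hq => hT q (Finset.mem_filter.1 hq).1) hb.2.1.1 hb.2.1.2 hβ0
          ((not_lt.1 hb.2.2).trans (le_max_left _ _)))
    refine e1.trans ?_
    have e2 : (((Z ×ˢ Z).filter fun q : ℝ × ℝ => ¬ |q.1 - q.2| < β).card : ℝ) ≤
        Z.card * Z.card := by
      have := Finset.card_filter_le (Z ×ˢ Z) fun q : ℝ × ℝ => ¬ |q.1 - q.2| < β
      rw [Finset.card_product] at this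
      exact_mod_cast this
    rw [Finset.card_product, Nat.cast_mul]
    gcongr
    refine e2.trans ?_
    gcongr
  have hTsum : (T.card : ℝ) = (T.filter fun q => |q.2.1.2 - q.2.2.2| < β).card +
      (T.filter fun q => ¬ |q.2.1.2 - q.2.2.2| < β).card := by
    have := Finset.card_filter_add_card_filter_not (s := T)
      (fun q : ℕ × ((ℝ × ℝ) × (ℝ × ℝ)) => |q.2.1.2 - q.2.2.2| < β)
    exact_mod_cast this.symm
  have hN := h.lower_one
  rw [← hc] at hN
  have hNpos : 0 < (Z.card : ℝ) := by
    by_contra h0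
    have : (Z.card : ℝ) = 0 := le_antisymm (not_lt.1 h0) (Nat.cast_nonneg _)
    rw [this, mul_zero] at hN
    linarith
  exact energy_numerics hδ hβ0 hρ0 hL hδ₂ hN hNpos hJ2 (by
    refine hlow.trans ?_
    rw [hTsum]
    refine (mul_le_mul_of_nonneg_left (add_le_add hnear hfar) (by positivity)).trans (le_of_eq ?_)
    ring)

end RegularRing

/-! ### Regular sets of intermediate dimension do not exist -/

lemma exists_small (M : ℝ) {a : ℝ} (ha : 0 < a) :
    ∃ δ₁ : ℝ, 0 < δ₁ ∧ δ₁ ≤ 1 ∧ ∀ δ, 0 < δ → δ < δ₁ → M * δ ^ a < 1 := by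
  have hM : 0 < |M| + 1 := by positivity
  refine ⟨(1 / (|M| + 1)) ^ (1 / a), by positivity, ?_, ?_⟩
  · apply Real.rpow_le_one (by positivity) _ (by positivity)
    rw [div_le_one hM]
    linarith [abs_nonneg M]
  · intro δ hδ hlt
    have h1 : δ ^ a < ((1 / (|M| + 1)) ^ (1 / a)) ^ a := Real.rpow_lt_rpow hδ.le hlt ha
    rw [← Real.rpow_mul (by positivity), one_div_mul_cancel ha.ne', Real.rpow_one,
      lt_div_iff₀ hM] at h1
    have h2 : 0 < δ ^ a := Real.rpow_pos_of_pos hδ _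
    nlinarith [le_abs_self M]

/-- There is no set that is `p`-dimensional at all scales, with `p` bounded away from `0` and `1`,
and whose `AA - AA` has small sumsets. -/
theorem no_regularRing {p₀ : ℝ} (h0 : 0 < p₀) (h1 : p₀ ≤ 1 / 4) :
    ∃ δ₁ : ℝ, 0 < δ₁ ∧ ∀ δ, 0 < δ → δ < δ₁ → ∀ (A : Set ℝ) (p : ℝ), 2 * p₀ ≤ p →
      p ≤ 1 - 2 * p₀ → ¬ RegularRing A δ p (δ ^ (-(p₀ ^ 2 / 32))) := by
  obtain ⟨δ₁, hδ₁, hδ₁1, hsmall⟩ := exists_small (10 ^ 10) (show 0 < p₀ ^ 2 / 4 by positivity)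
  refine ⟨δ₁, hδ₁, fun δ hδ hlt A p hp hp' h => ?_⟩
  have hs := hsmall δ hδ hlt
  have hδ1 : δ < 1 := hlt.trans_le hδ₁1
  set L := δ ^ (-(p₀ ^ 2 / 32)) with hL
  have hpow : ∀ x, p₀ ^ 2 / 4 ≤ x → δ ^ x ≤ δ ^ (p₀ ^ 2 / 4) := fun x hx =>
    Real.rpow_le_rpow_of_exponent_ge hδ hδ1.le hx
  have hLpow : ∀ n : ℕ, L ^ n = δ ^ (-(p₀ ^ 2 / 32) * n) := fun n => by
    rw [hL, ← Real.rpow_natCast, ← Real.rpow_mul hδ.le]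
  set ρ := δ ^ (p₀ / 4) with hρ
  set β := δ ^ (1 / 2 : ℝ) with hβ
  have hρ0 : 0 < ρ := Real.rpow_pos_of_pos hδ _
  have hρle : δ ≤ ρ := by
    conv_lhs => rw [← Real.rpow_one δ]
    exact Real.rpow_le_rpow_of_exponent_ge hδ hδ1.le (by linarith)
  have hβle : δ ≤ β := by
    conv_lhs => rw [← Real.rpow_one δ]
    exact Real.rpow_le_rpow_of_exponent_ge hδ hδ1.le (by norm_num)
  have hρ1 : ρ ≤ 1 := Real.rpow_le_one hδ.le hδ1.le (by positivity)
  have hρ2 : ρ ^ 2 = δ ^ (p₀ / 2) := by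
    rw [hρ, ← Real.rpow_natCast, ← Real.rpow_mul hδ.le]
    congr 1
    push_cast
    ring
  have hnum : 2 * 10 ^ 9 * L ^ 8 * ρ ^ p < 1 := by
    have e : L ^ 8 * ρ ^ p = δ ^ (-(p₀ ^ 2 / 32) * (8 : ℕ) + p₀ / 4 * p) := by
      rw [hLpow, hρ, ← Real.rpow_mul hδ.le, ← Real.rpow_add hδ]
    have e2 := hpow (-(p₀ ^ 2 / 32) * (8 : ℕ) + p₀ / 4 * p) (by push_cast; nlinarith)
    rw [mul_assoc, e]
    have : 0 < δ ^ (p₀ ^ 2 / 4) := Real.rpow_pos_of_pos hδ _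
    linarith
  have h2 : 2 * (δ / ρ ^ 2) ≤ 1 := by
    have e : δ / ρ ^ 2 = δ ^ (1 - p₀ / 2) := by
      rw [hρ2, Real.rpow_sub hδ, Real.rpow_one]
    have e2 := hpow (1 - p₀ / 2) (by nlinarith)
    rw [e]
    have : 0 < δ ^ (p₀ ^ 2 / 4) := Real.rpow_pos_of_pos hδ _
    linarith
  have hmain := h.energy (β := β) hρle hρ1 hnum h2 hβle
  have t1 : L ^ 7 * (β / ρ ^ 2) ^ p ≤ δ ^ (p₀ ^ 2 / 4) := by
    have e : L ^ 7 * (β / ρ ^ 2) ^ p =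
        δ ^ (-(p₀ ^ 2 / 32) * (7 : ℕ) + (1 / 2 - p₀ / 2) * p) := by
      rw [hLpow, hρ2, hβ, ← Real.rpow_sub hδ, ← Real.rpow_mul hδ.le, ← Real.rpow_add hδ]
    rw [e]
    apply hpow
    push_cast
    nlinarith
  have t2 : L ^ 7 * ((δ / β) ^ (1 - p) / ρ ^ 2) ≤ δ ^ (p₀ ^ 2 / 4) := by
    have e : L ^ 7 * ((δ / β) ^ (1 - p) / ρ ^ 2) =
        δ ^ (-(p₀ ^ 2 / 32) * (7 : ℕ) + ((1 - 1 / 2) * (1 - p) - p₀ / 2)) := by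
      have : δ / β = δ ^ (1 - 1 / 2 : ℝ) := by rw [hβ, Real.rpow_sub hδ, Real.rpow_one]
      rw [hLpow, hρ2, this, ← Real.rpow_mul hδ.le, ← Real.rpow_sub hδ, ← Real.rpow_add hδ]
    rw [e]
    apply hpow
    push_cast
    nlinarith
  have hfin : (1 : ℝ) ≤ 4 * 10 ^ 9 * (δ ^ (p₀ ^ 2 / 4) + δ ^ (p₀ ^ 2 / 4)) := by
    refine hmain.trans ?_
    rw [mul_assoc, mul_add]
    gcongr
  have : 0 < δ ^ (p₀ ^ 2 / 4) := Real.rpow_pos_of_pos hδ _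
  linarith

/-! ### Change of scale -/

/-- A bound for the sums of differences at scale `δ` passes to all larger scales: the densest
`ρ`-ball of `A` has at least the average number of points, and its translates by
`5 (AA - AA)` at scale `ρ` are contained in `6 (AA - AA)`. -/
lemma transfer {A : Set ℝ} {δ ρ K : ℝ} (hA : A ⊆ Icc 1 5) (hne : A.Nonempty) (hδ : 0 < δ)
    (hρ : δ ≤ ρ) (hK : (cn δ (mulDiffSum A 6) : ℝ) ≤ K * cn δ A) :
    (cn ρ (mulDiffSum A 5) : ℝ) ≤ 384 * K * cn ρ A := by
  classical
  have hb := bdd_of_subset_Icc hA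
  have hρ0 : 0 < ρ := hδ.trans_le hρ
  obtain ⟨g, hg⟩ := hne
  obtain ⟨g1, g5⟩ := hA hg
  obtain ⟨Z, hZ, hc, hinj⟩ := exists_section hδ hb
  have hcpos := cn_pos hδ hb ⟨g, hg⟩
  have hZne : Z.Nonempty := by
    rw [← Finset.card_pos, hc]
    exact_mod_cast hcpos
  obtain ⟨x₀, hx₀, hmax⟩ := Z.exists_max_image (fun x => (Z.filter fun z => |z - x| < ρ).card) hZne
  set Z' := Z.filter fun z => |z - x₀| < ρ with hZ'
  have h1 : (Z.card : ℝ) ≤ Z'.card * cn ρ A :=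
    card_le_fiber_mul_cn Z (fun x => x) hρ0 hb (by positivity) hZ
      (fun i hi => by exact_mod_cast hmax i hi)
  have hZ'pos : (1 : ℝ) ≤ Z'.card := by
    have : 0 < Z'.card := Finset.card_pos.2 ⟨x₀, by simp [hZ', hx₀, hρ0]⟩
    exact_mod_cast this
  have hZ'A : ∀ z ∈ Z', z ∈ A := fun z hz => hZ z (Finset.mem_filter.1 hz).1
  have hWb : ∃ B, ∀ x ∈ (fun x => g * x) '' (Z' : Set ℝ), |x| ≤ B := by
    obtain ⟨B, hB⟩ := hb
    refine ⟨g * B, ?_⟩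
    rintro _ ⟨x, hx, rfl⟩
    rw [abs_mul, abs_of_pos (by linarith)]
    have := hB x (hZ'A x hx)
    gcongr
  have h2 := cn_mul_cn_le (δ := δ) (r := ρ) (D := 10 * ρ) (d := 10) (g := 1) (k := -(g * g))
    (W := (fun x => g * x) '' (Z' : Set ℝ)) (A := mulDiffSum A 5) hδ hρ (by positivity) le_rfl
    le_rfl hWb (mulDiffSum_bdd hA 5) (mulDiffSum_bdd hA 6)
    (by
      rintro _ ⟨x, hx, rfl⟩ _ ⟨y, hy, rfl⟩
      have e1 := abs_lt.1 (Finset.mem_filter.1 hx).2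
      have e2 := abs_lt.1 (Finset.mem_filter.1 hy).2
      have e : (fun x => g * x) x - (fun x => g * x) y = g * (x - y) := by simp; ring
      have e3 : |x - y| ≤ 2 * ρ := by
        rw [abs_le]
        constructor <;> linarith [e1.1, e1.2, e2.1, e2.2]
      rw [e, abs_mul, abs_of_pos (by linarith)]
      calc g * |x - y| ≤ 5 * (2 * ρ) := by gcongr
        _ = 10 * ρ := by ring)
    (by
      rintro _ ⟨x, hx, rfl⟩ a ha
      have := mulDiffSum_succ ha (mul_sub_mem (hZ'A x hx) hg hg)
      convert this using 1
      simp only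
      ring)
  have h3 := cn_comp (r := δ) (r' := δ) (ℓ := δ) hδ hδ hδ.le (X := (Z' : Set ℝ))
    (bdd_mono (fun z hz => hZ'A z hz) hb) hWb
      (fun x => g * x) (fun x hx => ⟨x, hx, rfl⟩)
      (fun x _ y _ hxy => by
        have : g * x - g * y = g * (x - y) := by ring
        rw [this, abs_mul, abs_of_pos (by linarith)] at hxy
        nlinarith [abs_nonneg (x - y)])
  have e2 : 2 * δ / δ + 2 = 4 := by field_simp; norm_num
  rw [e2, ← card_eq_cn Z' (fun x hx y hy => hinj x (Finset.mem_filter.1 hx).1 y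
    (Finset.mem_filter.1 hy).1)] at h3
  have hKpos : 0 < K := by
    have := cn_pos hδ (mulDiffSum_bdd hA 6) ⟨0, zero_mem_mulDiffSum ⟨g, hg⟩ 6⟩
    by_contra h0
    nlinarith
  have h4 : (Z'.card : ℝ) * cn ρ (mulDiffSum A 5) ≤ Z'.card * (384 * K * cn ρ A) := by
    calc (Z'.card : ℝ) * cn ρ (mulDiffSum A 5) ≤
        (4 * cn δ ((fun x => g * x) '' (Z' : Set ℝ))) * cn ρ (mulDiffSum A 5) := by gcongr
      _ = 4 * (cn δ ((fun x => g * x) '' (Z' : Set ℝ)) * cn ρ (mulDiffSum A 5)) := by ring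
      _ ≤ 4 * ((4 * (2 * 10 + 4)) * (K * cn δ A)) :=
        mul_le_mul_of_nonneg_left (h2.trans (by gcongr)) (by norm_num)
      _ = 384 * K * Z.card := by rw [hc]; ring
      _ ≤ 384 * K * (Z'.card * cn ρ A) := by gcongr
      _ = _ := by ring
  exact le_of_mul_le_mul_left h4 (by linarith)

/-- Covering numbers of `A` are almost superadditive along differences of elements of `A`:
`e A + g A` needs about `N(ρ / |e|) N(|e|)` intervals of length `ρ`. -/
lemma cn_superadd {A : Set ℝ} {δ ρ K e : ℝ} (hA : A ⊆ Icc 1 5) (hne : A.Nonempty) (hδ : 0 < δ)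
    (hρ : δ ≤ ρ) (hK : (cn δ (mulDiffSum A 6) : ℝ) ≤ K * cn δ A)
    (he : ∃ a ∈ A, ∃ b ∈ A, e = |a - b|) (hρe : ρ ≤ e) :
    (cn (ρ / e) A : ℝ) * cn e A ≤ 10 ^ 5 * K * cn ρ A := by
  obtain ⟨a, ha, b, hb, rfl⟩ := he
  have hbd := bdd_of_subset_Icc hA
  have hρ0 : 0 < ρ := hδ.trans_le hρ
  have he0 : 0 < |a - b| := hρ0.trans_le hρe
  obtain ⟨g, hg⟩ := hne
  obtain ⟨g1, g5⟩ := hA hg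
  have hWb : ∃ B, ∀ x ∈ (fun x => (a - b) * x) '' A, |x| ≤ B := by
    obtain ⟨B, hB⟩ := hbd
    refine ⟨|a - b| * B, ?_⟩
    rintro _ ⟨x, hx, rfl⟩
    rw [abs_mul]
    have := hB x hx
    gcongr
  have h1 := cn_mul_cn_le (δ := ρ) (r := |a - b|) (D := 4 * |a - b|) (d := 4) (g := g)
    (k := -(g * g)) (W := (fun x => (a - b) * x) '' A) (A := A) (Y := mulDiffSum A 5) hρ0 hρe
    (by positivity) le_rfl g1 hWb hbd (mulDiffSum_bdd hA 5)
    (by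
      rintro _ ⟨x, hx, rfl⟩ _ ⟨y, hy, rfl⟩
      have e : (fun x => (a - b) * x) x - (fun x => (a - b) * x) y = (a - b) * (x - y) := by
        simp; ring
      have e3 : |x - y| ≤ 4 := by
        have := hA hx
        have := hA hy
        rw [abs_le]
        constructor <;> linarith [(hA hx).1, (hA hx).2, (hA hy).1, (hA hy).2]
      rw [e, abs_mul, mul_comm]
      gcongr)
    (by
      rintro _ ⟨x, hx, rfl⟩ y hy
      have := mulDiffSum_mono ⟨g, hg⟩ (show 2 ≤ 5 by norm_num)
        (mulDiffSum_succ (mulDiff_sub_one (sub_mul_mem ha hb hx)) (mul_sub_mem hy hg hg))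
      convert this using 1
      simp only
      ring)
  have h2 := cn_comp (r := ρ / |a - b|) (r' := ρ) (ℓ := ρ / |a - b|) (by positivity) hρ0
    (by positivity) hbd hWb (fun x => (a - b) * x) (fun x hx => ⟨x, hx, rfl⟩)
    (fun x _ y _ hxy => by
      have : (a - b) * x - (a - b) * y = (a - b) * (x - y) := by ring
      rw [this, abs_mul] at hxy
      rw [le_div_iff₀ he0]
      linarith)
  have e2 : 2 * (ρ / |a - b|) / (ρ / |a - b|) + 2 = 4 := by field_simp; norm_num
  rw [e2] at h2
  have h3 := transfer hA ⟨g, hg⟩ hδ hρ hK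
  have hpos : 0 ≤ K * cn ρ A := by
    have : (0 : ℝ) ≤ cn ρ (mulDiffSum A 5) := Nat.cast_nonneg _
    linarith
  calc (cn (ρ / |a - b|) A : ℝ) * cn |a - b| A ≤
      (4 * cn ρ ((fun x => (a - b) * x) '' A)) * cn |a - b| A := by gcongr
    _ = 4 * (cn ρ ((fun x => (a - b) * x) '' A) * cn |a - b| A) := by ring
    _ ≤ 4 * ((4 * (2 * 4 + 4)) * cn ρ (mulDiffSum A 5)) := by gcongr
    _ ≤ 4 * ((4 * (2 * 4 + 4)) * (384 * K * cn ρ A)) := by gcongr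
    _ = 73728 * (K * cn ρ A) := by ring
    _ ≤ 10 ^ 5 * (K * cn ρ A) := by gcongr; norm_num
    _ = _ := by ring

lemma cn_iterate {A : Set ℝ} {δ K e : ℝ} (hA : A ⊆ Icc 1 5) (hne : A.Nonempty) (hδ : 0 < δ)
    (hK : (cn δ (mulDiffSum A 6) : ℝ) ≤ K * cn δ A) (hK0 : 0 < K)
    (he : ∃ a ∈ A, ∃ b ∈ A, e = |a - b|) (he0 : 0 < e) (he1 : e ≤ 1) (n : ℕ) :
    ∀ ρ, δ ≤ ρ → ρ ≤ e ^ n → (cn e A / (10 ^ 5 * K) : ℝ) ^ n ≤ cn ρ A := by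
  induction n with
  | zero =>
    intro ρ hρ _
    rw [pow_zero]
    exact cn_pos (hδ.trans_le hρ) (bdd_of_subset_Icc hA) hne
  | succ n ih =>
    intro ρ hρ hρe
    have hρ0 : 0 < ρ := hδ.trans_le hρ
    have hn1 : e ^ n ≤ 1 := pow_le_one₀ he0.le he1
    rw [pow_succ] at hρe
    have h1 : ρ ≤ e := by nlinarith
    have h2 := cn_superadd hA hne hδ hρ hK he h1
    have h3 := ih (ρ / e) (hρ.trans (by rw [le_div_iff₀ he0]; nlinarith))
      (by rw [div_le_iff₀ he0]; exact hρe)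
    rw [pow_succ]
    calc (cn e A / (10 ^ 5 * K) : ℝ) ^ n * (cn e A / (10 ^ 5 * K)) ≤
        cn (ρ / e) A * (cn e A / (10 ^ 5 * K)) := by gcongr
      _ = cn (ρ / e) A * cn e A / (10 ^ 5 * K) := by ring
      _ ≤ cn ρ A := by
        rw [div_le_iff₀ (by positivity)]
        linarith

/-- Logarithmic form of the iteration of `cn_superadd`: the growth exponent of the covering numbers
between `1` and any scale `ρ` is at least the exponent between `1` and `e`, up to losses that depend
on `K` and `e`. -/
lemma log_cn_lower {A : Set ℝ} {δ K e ρ : ℝ} (hA : A ⊆ Icc 1 5) (hne : A.Nonempty) (hδ : 0 < δ)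
    (hK : (cn δ (mulDiffSum A 6) : ℝ) ≤ K * cn δ A) (hK1 : 1 ≤ K)
    (he : ∃ a ∈ A, ∃ b ∈ A, e = |a - b|) (he0 : 0 < e) (he1 : e < 1) (hρ : δ ≤ ρ) (hρ1 : ρ ≤ 1) :
    -Real.log ρ * ((Real.log (cn e A) - Real.log (10 ^ 5 * K)) / -Real.log e) + Real.log e ≤
      Real.log (cn ρ A) := by
  have hbd := bdd_of_subset_Icc hA
  have hρ0 : 0 < ρ := hδ.trans_le hρ
  have hx : 0 < -Real.log e := by
    have := Real.log_neg he0 he1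
    linarith
  have hy : 0 ≤ -Real.log ρ := by
    have := Real.log_nonpos hρ0.le hρ1
    linarith
  have hN1 := cn_pos hρ0 hbd hne
  have hl0 : 0 ≤ Real.log (cn ρ A) := Real.log_nonneg hN1
  set x := -Real.log e with hxdef
  set y := -Real.log ρ with hydef
  set k := Real.log (10 ^ 5 * K) with hk
  have hne0 := cn_pos he0 hbd hne
  have hmain : ∀ d, d = Real.log (cn e A) - k → y * (d / x) - x ≤ Real.log (cn ρ A) := by
    intro d hd
    by_cases hd0 : d < 0
    · have : y * (d / x) ≤ 0 :=
        mul_nonpos_of_nonneg_of_nonpos hy (div_nonpos_of_nonpos_of_nonneg hd0.le hx.le)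
      linarith
    · push Not at hd0
      set n := ⌊y / x⌋₊ with hn
      have hn1 : n * x ≤ y := by
        have := Nat.floor_le (show 0 ≤ y / x by positivity)
        rwa [le_div_iff₀ hx] at this
      have hn2 : y / x ≤ n + 1 := (Nat.lt_floor_add_one _).le
      have hpow : ρ ≤ e ^ n := by
        rw [← Real.log_le_log_iff hρ0 (by positivity), Real.log_pow]
        rw [hxdef, hydef] at hn1
        linarith
      have h1 := cn_iterate hA hne hδ hK (by linarith) he he0 he1.le n ρ hρ hpow
      have h2 : n * d ≤ Real.log (cn ρ A) := by
        have h3 := Real.log_le_log (by positivity) h1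
        rwa [Real.log_pow, Real.log_div (by positivity) (by positivity), ← hk, ← hd] at h3
      have hdx : d ≤ x := by
        have h3 : (cn e A : ℝ) ≤ 10 ^ 5 * K * e⁻¹ := by
          have h4 := cn_le_of_diam he0 (show (0 : ℝ) ≤ 4 by norm_num) hbd (by
            intro u hu v hv
            rw [abs_le]
            constructor <;> linarith [(hA hu).1, (hA hu).2, (hA hv).1, (hA hv).2])
          have h5 : 1 ≤ e⁻¹ := (one_le_inv₀ he0).2 he1.le
          calc (cn e A : ℝ) ≤ 4 / e + 2 := h4
            _ = 4 * e⁻¹ + 2 * 1 := by ring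
            _ ≤ 4 * e⁻¹ + 2 * e⁻¹ := by gcongr
            _ = 6 * 1 * e⁻¹ := by ring
            _ ≤ 10 ^ 5 * K * e⁻¹ := by gcongr; norm_num
        have h4 := Real.log_le_log (by linarith) h3
        rw [Real.log_mul (by positivity) (by positivity), Real.log_inv, ← hk] at h4
        rw [hd]
        linarith
      have e1 : y * (d / x) = y / x * d := by ring
      rw [e1]
      have : y / x * d ≤ (n + 1) * d := by gcongr
      linarith
  have := hmain _ rfl
  rw [hxdef] at this ⊢
  linarith

/-- Non-concentration produces a difference of elements of `A` between `u` and `v`, as soon as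
`A` has more than a constant times `1 / v` cells at scale `u`. -/
lemma exists_difference {A : Set ℝ} {u v : ℝ} (hA : A ⊆ Icc 1 5) (hu : 0 < u) (hv : 0 < v)
    (hv1 : v ≤ 1) (h : 24 / v < cn u A) :
    ∃ a ∈ A, ∃ b ∈ A, u ≤ |a - b| ∧ |a - b| < v := by
  by_contra hcon
  push Not at hcon
  have hbd := bdd_of_subset_Icc hA
  have h1 := cn_comp (r := u) (r' := v) (ℓ := u) hu hv hu.le hbd hbd (fun x => x)
    (fun x hx => hx) (fun x hx y hy hxy => by
      by_contra hlt
      push Not at hlt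
      exact absurd hxy (not_lt.2 (hcon x hx y hy hlt.le)))
  have e2 : 2 * u / u + 2 = 4 := by field_simp; norm_num
  rw [e2] at h1
  have h2 := cn_le_of_diam hv (show (0 : ℝ) ≤ 4 by norm_num) hbd (by
    intro u hu v hv
    rw [abs_le]
    constructor <;> linarith [(hA hu).1, (hA hu).2, (hA hv).1, (hA hv).2])
  have h3 : 2 ≤ 2 / v := by rw [le_div_iff₀ hv]; linarith
  have h4 : 24 / v = 4 * (4 / v + 2 / v) := by ring
  linarith

/-- A nonnegative sequence cannot decrease by `τ` at each of its first `I > 1 / τ` steps. -/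
lemma exists_stable {s : ℕ → ℝ} {τ : ℝ} {I : ℕ} (hτ : 0 ≤ τ) (h0 : s 0 ≤ 1)
    (hs : 0 ≤ s I) (hI : 1 < I * τ) :
    ∃ i < I, s i - τ ≤ s (i + 1) ∧ s i ≤ s 0 := by
  by_contra hcon
  push Not at hcon
  have key : ∀ i : ℕ, i ≤ I → s i ≤ s 0 - i * τ := by
    intro i
    induction i with
    | zero => intro _; simp
    | succ i ih =>
      intro hi
      have h1 := ih (by omega)
      by_contra h2
      push Not at h2
      push_cast at h2
      have h3 : 0 ≤ i * τ := by positivity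
      have := hcon i (by omega) (by linarith)
      linarith
  have := key I le_rfl
  linarith

/-! ### The discretized ring theorem -/

set_option maxHeartbeats 2000000 in
/-- Discretized ring theorem: a set of intermediate dimension with a non-concentration property
cannot have small sums of differences of products. -/
theorem discretized_ring {κ c : ℝ} (hκ : 0 < κ) (hκ1 : κ < 1) (hc : 0 < c) (hc1 : c < 1) :
    ∃ ε : ℝ, 0 < ε ∧ ∃ δ₀ : ℝ, 0 < δ₀ ∧ ∀ δ, 0 < δ → δ < δ₀ → ∀ A : Set ℝ, A ⊆ Icc 1 5 →
      A.Nonempty → (cn δ (mulDiffSum A 6) : ℝ) ≤ δ ^ (-ε) * cn δ A →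
      (cn δ A : ℝ) ≤ δ ^ (-1 + c) →
      (∀ ρ, δ ≤ ρ → ρ ≤ 1 → δ ^ ε * ρ ^ (-κ) ≤ cn ρ A) → False := by
  obtain ⟨p₀, hp₀, hp₀κ, hp₀c⟩ : ∃ p₀ : ℝ, 0 < p₀ ∧ 4 * p₀ ≤ κ ∧ 4 * p₀ ≤ c :=
    ⟨min κ c / 4, by positivity, by linarith [min_le_left κ c], by linarith [min_le_right κ c]⟩
  obtain ⟨δ₁, hδ₁, hC⟩ := no_regularRing hp₀ (by linarith)
  set ξ := p₀ ^ 2 / 32 with hξ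
  set ω := ξ / 4 with hω
  have hξ0 : 0 < ξ := by positivity
  have hξp : ξ ≤ p₀ := by rw [hξ]; nlinarith
  have hω0 : 0 < ω := by positivity
  have hω1 : ω ≤ 1 := by rw [hω]; linarith
  set ω' := ω * κ / 2 with hω'
  have hω'0 : 0 < ω' := by positivity
  have hω'1 : ω' ≤ 1 := by rw [hω']; nlinarith
  obtain ⟨I, hI⟩ : ∃ I : ℕ, 1 < I * ω := by
    obtain ⟨I, hI⟩ := exists_nat_gt (1 / ω)
    exact ⟨I, by rwa [div_lt_iff₀ hω0] at hI⟩
  set μ := ω' ^ I with hμ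
  have hμ0 : 0 < μ := by positivity
  have hμ1 : μ ≤ 1 := pow_le_one₀ hω'0.le hω'1
  set ε := ω * μ / 2 with hε
  have hε0 : 0 < ε := by positivity
  have hεμ : ε ≤ μ / 2 := by rw [hε]; nlinarith
  obtain ⟨d₁, hd₁, hd₁1, hs₁⟩ := exists_small 24 (show 0 < μ / 2 by positivity)
  obtain ⟨d₂, hd₂, -, hs₂⟩ := exists_small (10 ^ 5) (show 0 < ω * μ / 2 by positivity)
  obtain ⟨d₃, hd₃, -, hs₃⟩ := exists_small (1 / δ₁) hμ0
  refine ⟨ε, hε0, min d₁ (min d₂ d₃), by positivity, ?_⟩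
  intro δ hδ hlt A hA hne hK hup hnc
  have hs₁ := hs₁ δ hδ (hlt.trans_le (min_le_left _ _))
  have hs₂ := hs₂ δ hδ (hlt.trans_le ((min_le_right _ _).trans (min_le_left _ _)))
  have hs₃ := hs₃ δ hδ (hlt.trans_le ((min_le_right _ _).trans (min_le_right _ _)))
  have hδ1 : δ < 1 := (hlt.trans_le (min_le_left _ _)).trans_le hd₁1
  have hbd := bdd_of_subset_Icc hA
  set Λ := -Real.log δ with hΛ
  have hΛ0 : 0 < Λ := by
    have := Real.log_neg hδ hδ1
    linarith
  set K := δ ^ (-ε) with hKdef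
  have hK1 : 1 ≤ K := Real.one_le_rpow_of_pos_of_le_one_of_nonpos hδ hδ1.le (by linarith)
  set k := Real.log (10 ^ 5 * K) with hk
  have hkle : k ≤ ω * μ * Λ := by
    have e1 : Real.log K = ε * Λ := by rw [hKdef, Real.log_rpow hδ]; ring
    have e2 := Real.log_le_log (by positivity) hs₂.le
    rw [Real.log_mul (by norm_num) (by positivity), Real.log_one, Real.log_rpow hδ] at e2
    rw [hk, Real.log_mul (by norm_num) (by positivity), e1, hε]
    have : Real.log δ = -Λ := by rw [hΛ]; ring
    rw [this] at e2
    linarith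
  -- Scales `r i` with `-log (r i)` of order `ω' ^ i * Λ`: the first is `δ`, and the others are
  -- differences of elements of `A`, as `log_cn_lower` requires.
  have hscale : ∀ i : ℕ, ∃ r : ℝ, i ≤ I → (δ ≤ r ∧ r < 1 ∧ μ * Λ ≤ -Real.log r ∧
      ω' ^ i * Λ ≤ -Real.log r ∧ (i = 0 → r = δ) ∧ (i ≠ 0 → -Real.log r ≤ 2 / κ * ω' ^ i * Λ ∧
        ∃ a ∈ A, ∃ b ∈ A, r = |a - b|)) := by
    intro i
    by_cases hi0 : i = 0
    · subst hi0
      refine ⟨δ, fun _ => ⟨le_rfl, hδ1, ?_, ?_, fun _ => rfl, fun h => absurd rfl h⟩⟩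
      · rw [← hΛ]; nlinarith
      · rw [pow_zero, one_mul]
    · by_cases hiI : i ≤ I
      · set w := ω' ^ i with hw
        have hw0 : 0 < w := by positivity
        have hμw : μ ≤ w := pow_le_pow_of_le_one hω'0.le hω'1 hiI
        have hCw : 2 / κ * w ≤ 1 := by
          have : w ≤ ω' := by
            calc w ≤ ω' ^ 1 := pow_le_pow_of_le_one hω'0.le hω'1 (by omega)
              _ = ω' := pow_one _
          calc 2 / κ * w ≤ 2 / κ * ω' := by gcongr
            _ = ω := by rw [hω']; field_simp
            _ ≤ 1 := hω1
        set u := δ ^ (2 / κ * w) with hu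
        set v := δ ^ w with hv
        have hu0 : 0 < u := Real.rpow_pos_of_pos hδ _
        have hv0 : 0 < v := Real.rpow_pos_of_pos hδ _
        have hv1 : v < 1 := Real.rpow_lt_one hδ.le hδ1 hw0
        have hδu : δ ≤ u := by
          conv_lhs => rw [← Real.rpow_one δ]
          exact Real.rpow_le_rpow_of_exponent_ge hδ hδ1.le hCw
        have hu1 : u ≤ 1 := Real.rpow_le_one hδ.le hδ1.le (by positivity)
        have hcount : 24 / v < cn u A := by
          refine lt_of_lt_of_le ?_ (hnc u hδu hu1)
          have e1 : u ^ (-κ) = δ ^ (-(2 * w)) := by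
            rw [hu, ← Real.rpow_mul hδ.le]
            congr 1
            field_simp
          rw [e1, ← Real.rpow_add hδ, div_lt_iff₀ hv0, hv, ← Real.rpow_add hδ]
          have e2 : 1 ≤ δ ^ (μ / 2) * δ ^ (ε + -(2 * w) + w) := by
            rw [← Real.rpow_add hδ]
            apply Real.one_le_rpow_of_pos_of_le_one_of_nonpos hδ hδ1.le
            linarith
          have e3 : 0 < δ ^ (ε + -(2 * w) + w) := Real.rpow_pos_of_pos hδ _
          nlinarith
        obtain ⟨a, ha, b, hb, h1, h2⟩ := exists_difference hA hu0 hv0 hv1.le hcount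
        have hr0 : 0 < |a - b| := hu0.trans_le h1
        have hl1 : w * Λ ≤ -Real.log |a - b| := by
          have := Real.log_le_log hr0 h2.le
          rw [hv, Real.log_rpow hδ] at this
          rw [hΛ]
          linarith
        have hl2 : -Real.log |a - b| ≤ 2 / κ * w * Λ := by
          have := Real.log_le_log hu0 h1
          rw [hu, Real.log_rpow hδ] at this
          rw [hΛ]
          linarith
        refine ⟨|a - b|, fun _ => ⟨hδu.trans h1, h2.trans hv1, ?_, hl1, fun h => absurd h hi0,
          fun _ => ⟨hl2, a, ha, b, hb, rfl⟩⟩⟩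
        exact le_trans (by gcongr) hl1
      · exact ⟨0, fun h => absurd h hiI⟩
  choose r hr using hscale
  set s : ℕ → ℝ := fun i => Real.log (cn (r i) A) / -Real.log (r i) with hs
  have hx : ∀ i ≤ I, 0 < -Real.log (r i) := fun i hi =>
    lt_of_lt_of_le (by positivity) (hr i hi).2.2.1
  have hs0 : s 0 ≤ 1 - c := by
    have h1 := (hr 0 (Nat.zero_le _)).2.2.2.2.1 rfl
    simp only [hs]
    rw [h1, div_le_iff₀ (by linarith)]
    have h2 := Real.log_le_log (by linarith [cn_pos hδ hbd hne]) hup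
    rw [Real.log_rpow hδ] at h2
    linarith
  have hsI : 0 ≤ s I := by
    apply div_nonneg _ (hx I le_rfl).le
    exact Real.log_nonneg (cn_pos (hδ.trans_le (hr I le_rfl).1) hbd hne)
  obtain ⟨i, hi, hstep, hsle⟩ := exists_stable hω0.le (by linarith) hsI hI
  obtain ⟨hδr, hr1, hxμ, hxw, -, -⟩ := hr i hi.le
  obtain ⟨hδr', hr1', hxμ', hxw', -, hdiff⟩ := hr (i + 1) hi
  obtain ⟨hxC, hmem⟩ := hdiff (by omega)
  have hsi : s i = Real.log (cn (r i) A) / -Real.log (r i) := rfl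
  have hsi' : s (i + 1) = Real.log (cn (r (i + 1)) A) / -Real.log (r (i + 1)) := rfl
  have hx0 := hx i hi.le
  have hx0' := hx (i + 1) hi
  generalize hR : r i = R at *
  generalize hE : r (i + 1) = E at *
  have hR0 : 0 < R := hδ.trans_le hδr
  have hE0 : 0 < E := hδ.trans_le hδr'
  set x := -Real.log R with hxdef
  set x' := -Real.log E with hx'def
  have hx'x : x' ≤ ω * x := by
    calc x' ≤ 2 / κ * ω' ^ (i + 1) * Λ := hxC
      _ = ω * (ω' ^ i * Λ) := by rw [pow_succ]; nth_rewrite 2 [hω']; field_simp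
      _ ≤ ω * x := by gcongr
  have hkx' : k ≤ ω * x' := hkle.trans (by rw [mul_assoc]; gcongr)
  have hsiN : s i * x = Real.log (cn R A) := by rw [hsi]; field_simp
  have hsκ : κ - ω ≤ s i := by
    have h1 := hnc R hδr hr1.le
    have h2 := Real.log_le_log (by positivity) h1
    rw [Real.log_mul (by positivity) (by positivity), Real.log_rpow hδ, Real.log_rpow hR0,
      ← hsiN] at h2
    have h3 : ε * Λ ≤ ω * x := by
      calc ε * Λ ≤ ω * (μ * Λ) := by
            rw [hε]
            have : 0 ≤ ω * (μ * Λ) := by positivity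
            linarith
        _ ≤ ω * x := by gcongr
    have h4 : (κ - ω) * x ≤ s i * x := by
      have e1 : ε * Real.log δ = -(ε * Λ) := by rw [hΛ]; ring
      have e2 : -κ * Real.log R = κ * x := by rw [hxdef]; ring
      rw [e1, e2] at h2
      linarith
    exact le_of_mul_le_mul_right h4 hx0
  have hRδ₁ : R < δ₁ := by
    have h1 : R ≤ δ ^ μ := by
      rw [← Real.log_le_log_iff hR0 (by positivity), Real.log_rpow hδ]
      have e1 : μ * Real.log δ = -(μ * Λ) := by rw [hΛ]; ring
      rw [e1]
      linarith
    rw [one_div, inv_mul_lt_iff₀ hδ₁, mul_one] at hs₃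
    linarith
  -- By stability the exponent at the much coarser scale `E` is at least `s i - ω`, so `p` lies
  -- slightly below the exponents at both scales.
  set p := s i - ω - ω with hp
  refine hC R hR0 hRδ₁ A p (by linarith) (by linarith) ?_
  have hlogL : Real.log (R ^ (-ξ)) = ξ * x := by rw [Real.log_rpow hR0, hxdef]; ring
  refine ⟨hA, hne, hR0, hr1.le, by linarith, by linarith,
    Real.one_le_rpow_of_pos_of_le_one_of_nonpos hR0 hr1.le (by linarith), ?_, ?_⟩
  · intro ρ hρ hρ1
    have hρ0 : 0 < ρ := hR0.trans_le hρ
    have hN := cn_pos hρ0 hbd hne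
    have hN0 : (0 : ℝ) < cn ρ A := by linarith
    rw [← Real.log_le_log_iff (by positivity) (by positivity), Real.log_rpow hρ0,
      Real.log_mul (by positivity) (by positivity), hlogL]
    have h1 := log_cn_lower hA hne hδ hK hK1 hmem hE0 hr1' (hδr.trans hρ) hρ1
    rw [← hk, ← hx'def] at h1
    have hy0 : 0 ≤ -Real.log ρ := by
      have := Real.log_nonpos hρ0.le hρ1
      linarith
    have h2 : p ≤ (Real.log (cn E A) - k) / x' := by
      rw [sub_div, ← hsi']
      have : k / x' ≤ ω := by rw [div_le_iff₀ hx0']; exact hkx'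
      linarith
    have h3 : -Real.log ρ * p ≤ -Real.log ρ * ((Real.log (cn E A) - k) / x') := by gcongr
    have h4 : x' ≤ ξ * x := hx'x.trans (by gcongr; linarith)
    have h5 : Real.log E = -x' := by rw [hx'def]; ring
    have h6 : -p * Real.log ρ = -Real.log ρ * p := by ring
    rw [h6]
    linarith
  · have h1 := transfer hA hne hδ hδr hK
    have h5 := cn_pos hR0 (mulDiffSum_bdd hA 5) ⟨0, zero_mem_mulDiffSum hne 5⟩
    have hN := cn_pos hR0 hbd hne
    have hN0 : (0 : ℝ) < cn R A := by linarith
    rw [← Real.log_le_log_iff (by linarith) (by positivity),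
      Real.log_mul (by positivity) (by positivity), hlogL, Real.log_rpow hR0]
    have h2 : (cn R (mulDiffSum A 5) : ℝ) ≤ 10 ^ 5 * K * cn R A := h1.trans (by gcongr; norm_num)
    have h3 := Real.log_le_log (by linarith) h2
    rw [Real.log_mul (by positivity) (by positivity), ← hk, ← hsiN] at h3
    have h4 : k ≤ ω * x := by
      have : ω * x ≤ 1 * x := by gcongr
      refine hkx'.trans ?_
      gcongr
      linarith
    have e2 : -p * Real.log R = p * x := by rw [hxdef]; ring
    rw [e2, hp]
    have : 4 * ω = ξ := by rw [hω]; ring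
    rw [← this]
    linarith

/-! ### Expanding maps and Plünnecke's inequality -/

lemma cn_le_covN {δ : ℝ} (hδ : 0 < δ) {X : Set ℝ} (hX : ∃ B, ∀ x ∈ X, |x| ≤ B) :
    (cn δ X : ℝ) ≤ 3 * covN (fun x y : ℝ => |x - y|) δ X := by
  classical
  have hne : {n : ℕ | ∃ T : Finset ℝ, T.card = n ∧ ∀ s ∈ X, ∃ t ∈ T, |s - t| ≤ δ}.Nonempty := by
    refine ⟨_, (cells_finite hδ hX).toFinset.image (fun k : ℤ => (k : ℝ) * δ), rfl, ?_⟩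
    intro s hs
    refine ⟨⌊s / δ⌋ * δ, Finset.mem_image.2 ⟨⌊s / δ⌋, ?_, rfl⟩, ?_⟩
    · rw [Set.Finite.mem_toFinset]
      exact ⟨s, hs, rfl⟩
    · have h1 := Int.floor_le (s / δ)
      have h2 := (Int.lt_floor_add_one (s / δ)).le
      rw [le_div_iff₀ hδ] at h1
      rw [div_le_iff₀ hδ] at h2
      rw [abs_le]
      constructor <;> linarith
  obtain ⟨T, hT, hcov⟩ := Nat.sInf_mem hne
  have h3 : covN (fun x y : ℝ => |x - y|) δ X = T.card := hT.symm
  rw [h3]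
  have key : cn δ X ≤ T.card * 3 := by
    have h4 : (fun x : ℝ => ⌊x / δ⌋) '' X ⊆
        ((T.biUnion fun t => Finset.Icc (⌊t / δ⌋ - 1) (⌊t / δ⌋ + 1) : Finset ℤ) : Set ℤ) := by
      rintro _ ⟨x, hx, rfl⟩
      obtain ⟨t, ht, hd⟩ := hcov x hx
      obtain ⟨hd1, hd2⟩ := abs_le.1 hd
      simp only [Finset.coe_biUnion, Set.mem_iUnion, Finset.mem_coe, Finset.mem_Icc]
      refine ⟨t, ht, ?_, ?_⟩
      · rw [← Int.floor_sub_one]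
        apply Int.floor_le_floor
        rw [sub_le_iff_le_add, div_add_one hδ.ne']
        gcongr
        linarith
      · rw [← Int.floor_add_one]
        apply Int.floor_le_floor
        rw [div_add_one hδ.ne']
        gcongr
        linarith
    calc cn δ X ≤ (T.biUnion fun t => Finset.Icc (⌊t / δ⌋ - 1) (⌊t / δ⌋ + 1)).card := by
          rw [← Set.ncard_coe_finset]
          exact Set.ncard_le_ncard h4 (Finset.finite_toSet _)
      _ ≤ T.card * 3 := by
          apply Finset.card_biUnion_le_card_mul
          intro t _
          rw [Int.card_Icc]
          omega
  calc (cn δ X : ℝ) ≤ ((T.card * 3 : ℕ) : ℝ) := by exact_mod_cast key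
    _ = 3 * T.card := by push_cast; ring

/-- If `F` does not contract distances too much on `S`, then its image has to meet many cells,
because each of them only accounts for a short piece of `S`. -/
lemma volume_le_count {S : Set ℝ} {F : ℝ → ℝ} {r ℓ m v : ℝ} (hr : 0 < r) (hm : 0 ≤ m)
    (hX : ∃ B, ∀ y ∈ F '' S, |y| ≤ B)
    (hF : ∀ x ∈ S, ∀ y ∈ S, |F x - F y| < r → |x - y| ≤ ℓ)
    (hball : ∀ a, volume (S ∩ Icc (a - ℓ) (a + ℓ)) ≤ ENNReal.ofReal m)
    (hv : ENNReal.ofReal v ≤ volume S) : v ≤ m * cn r (F '' S) := by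
  classical
  have hfin := cells_finite hr hX
  have hc : cn r (F '' S) = hfin.toFinset.card := Set.ncard_eq_toFinset_card _ hfin
  have h1 : S ⊆ ⋃ k ∈ hfin.toFinset, {x ∈ S | ⌊F x / r⌋ = k} := by
    intro x hx
    simp only [Set.mem_iUnion]
    exact ⟨⌊F x / r⌋, hfin.mem_toFinset.2 ⟨F x, ⟨x, hx, rfl⟩, rfl⟩, hx, rfl⟩
  have h2 : ∀ k : ℤ, volume {x ∈ S | ⌊F x / r⌋ = k} ≤ ENNReal.ofReal m := by
    intro k
    rcases Set.eq_empty_or_nonempty {x ∈ S | ⌊F x / r⌋ = k} with h | ⟨x₀, hx₀, hk⟩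
    · rw [h]; simp
    · refine le_trans (measure_mono ?_) (hball x₀)
      rintro x ⟨hx, hxk⟩
      have := abs_le.1 (hF x hx x₀ hx₀ (abs_sub_lt_of_floor_eq hr (hxk.trans hk.symm)))
      exact ⟨hx, by linarith, by linarith⟩
  have h3 : ENNReal.ofReal v ≤ ENNReal.ofReal (m * cn r (F '' S)) := by
    calc ENNReal.ofReal v ≤ volume S := hv
      _ ≤ volume (⋃ k ∈ hfin.toFinset, {x ∈ S | ⌊F x / r⌋ = k}) := measure_mono h1
      _ ≤ ∑ k ∈ hfin.toFinset, volume {x ∈ S | ⌊F x / r⌋ = k} := measure_biUnion_finset_le _ _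
      _ ≤ ∑ k ∈ hfin.toFinset, ENNReal.ofReal m := Finset.sum_le_sum fun k _ => h2 k
      _ = ENNReal.ofReal (m * cn r (F '' S)) := by
          rw [Finset.sum_const, hc, nsmul_eq_mul, mul_comm, ENNReal.ofReal_mul hm,
            ENNReal.ofReal_natCast]
  rwa [ENNReal.ofReal_le_ofReal_iff (by positivity)] at h3

/-- The function `x ↦ x² + γ / x²`. -/
noncomputable def jk (γ x : ℝ) : ℝ := x ^ 2 + γ / x ^ 2

lemma jk_sub {γ p q : ℝ} (hp : 0 < p) (hq : 0 < q) :
    jk γ p - jk γ q = (p - q) * (p + q) * (1 - γ / (p * q) ^ 2) := by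
  unfold jk
  field_simp
  ring

/-- Away from its critical point `t`, the map `jk (t ^ 4)` does not contract distances too much. -/
lemma jk_expand {t η p q : ℝ} (hη : 0 < η) (hp : p ∈ Icc (1 / 2 : ℝ) 2)
    (hq : q ∈ Icc (1 / 2 : ℝ) 2) (ht : 0 < t)
    (h : (t + η ≤ p ∧ t + η ≤ q) ∨ (p ≤ t - η ∧ q ≤ t - η)) :
    η / 2 * |p - q| ≤ |jk (t ^ 4) p - jk (t ^ 4) q| := by
  obtain ⟨hp1, hp2⟩ := hp
  obtain ⟨hq1, hq2⟩ := hq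
  have hp0 : 0 < p := by linarith
  have hq0 : 0 < q := by linarith
  rw [jk_sub hp0 hq0, abs_mul, abs_mul, abs_of_pos (show 0 < p + q by linarith)]
  have hpq : 0 < p * q := by positivity
  have key : η / 2 ≤ |1 - t ^ 4 / (p * q) ^ 2| := by
    have e : t ^ 4 / (p * q) ^ 2 = (t / p) ^ 2 * (t / q) ^ 2 := by field_simp
    rw [e]
    have hp' : 0 < t / p := by positivity
    have hq' : 0 < t / q := by positivity
    rcases h with ⟨h1, h2⟩ | ⟨h1, h2⟩
    · refine le_trans ?_ (le_abs_self _)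
      have a1 : t / p ≤ 1 - η / 2 := by
        rw [div_le_iff₀ hp0]
        nlinarith
      have a2 : t / q ≤ 1 := by rw [div_le_one hq0]; linarith
      have a3 : (t / q) ^ 2 ≤ 1 := pow_le_one₀ hq'.le a2
      have a4 : (t / p) ^ 2 ≤ 1 - η / 2 := by nlinarith
      nlinarith [sq_nonneg (t / p)]
    · rw [abs_sub_comm]
      refine le_trans ?_ (le_abs_self _)
      have a1 : 1 + η / 2 ≤ t / p := by
        rw [le_div_iff₀ hp0]
        nlinarith
      have a2 : 1 ≤ t / q := by rw [one_le_div hq0]; linarith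
      have a3 : 1 ≤ (t / q) ^ 2 := one_le_pow₀ a2
      have a4 : 1 + η / 2 ≤ (t / p) ^ 2 := by nlinarith
      nlinarith [sq_nonneg (t / p)]
  have hn := abs_nonneg (p - q)
  calc η / 2 * |p - q| ≤ |1 - t ^ 4 / (p * q) ^ 2| * |p - q| := by gcongr
    _ ≤ |1 - t ^ 4 / (p * q) ^ 2| * (|p - q| * (p + q)) := by
        gcongr
        nlinarith
    _ = _ := by ring

/-- A quarter of `S` lies on one side of the critical point of `jk γ`, and not too close to it. -/
lemma exists_side {S : Set ℝ} {γ η V : ℝ} (hS : S ⊆ Icc (1 / 2) 2) (hγ : 0 < γ) (hη : 0 < η)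
    (hV : 0 < V) (hvol : volume S = ENNReal.ofReal V)
    (hball : ∀ a, volume (S ∩ Icc (a - η) (a + η)) ≤ ENNReal.ofReal (V / 2)) :
    ∃ S' ⊆ S, ENNReal.ofReal (V / 4) ≤ volume S' ∧
      ∀ p ∈ S', ∀ q ∈ S', η / 2 * |p - q| ≤ |jk γ p - jk γ q| := by
  obtain ⟨t, ht, htγ⟩ : ∃ t : ℝ, 0 < t ∧ t ^ 4 = γ := by
    refine ⟨√(√γ), by positivity, ?_⟩
    rw [show 4 = 2 * 2 by norm_num, pow_mul, Real.sq_sqrt (by positivity), Real.sq_sqrt hγ.le]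
  subst htγ
  have hcov : S ⊆ ({x ∈ S | t + η ≤ x} ∪ {x ∈ S | x ≤ t - η}) ∪ (S ∩ Icc (t - η) (t + η)) := by
    intro x hx
    by_cases h1 : t + η ≤ x
    · exact Or.inl (Or.inl ⟨hx, h1⟩)
    · by_cases h2 : x ≤ t - η
      · exact Or.inl (Or.inr ⟨hx, h2⟩)
      · exact Or.inr ⟨hx, by linarith, by linarith⟩
  have hle : volume S ≤ volume {x ∈ S | t + η ≤ x} + volume {x ∈ S | x ≤ t - η} +
      ENNReal.ofReal (V / 2) :=
    (measure_mono hcov).trans ((measure_union_le _ _).trans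
      (add_le_add (measure_union_le _ _) (hball t)))
  by_cases hA : ENNReal.ofReal (V / 4) ≤ volume {x ∈ S | t + η ≤ x}
  · refine ⟨_, Set.sep_subset _ _, hA, ?_⟩
    rintro p ⟨hp, hp'⟩ q ⟨hq, hq'⟩
    exact jk_expand hη (hS hp) (hS hq) ht (Or.inl ⟨hp', hq'⟩)
  by_cases hB : ENNReal.ofReal (V / 4) ≤ volume {x ∈ S | x ≤ t - η}
  · refine ⟨_, Set.sep_subset _ _, hB, ?_⟩
    rintro p ⟨hp, hp'⟩ q ⟨hq, hq'⟩
    exact jk_expand hη (hS hp) (hS hq) ht (Or.inr ⟨hp', hq'⟩)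
  exfalso
  rw [not_le] at hA hB
  have h4 : volume S < ENNReal.ofReal (V / 4) + ENNReal.ofReal (V / 4) + ENNReal.ofReal (V / 2) :=
    hle.trans_lt (ENNReal.add_lt_add_right ENNReal.ofReal_ne_top (ENNReal.add_lt_add hA hB))
  rw [← ENNReal.ofReal_add (by positivity) (by positivity),
    ← ENNReal.ofReal_add (by positivity) (by positivity), hvol] at h4
  have : V / 4 + V / 4 + V / 2 = V := by ring
  rw [this] at h4
  exact lt_irrefl _ h4

/-- Plünnecke's inequality for covering numbers: if `X + lam H` is small and every element of `GG`
is the sum of two elements of `H`, then the multiples of `lam` in the sums of differences of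
products of `G` stay close to a small set of integer multiples of `δ`. -/
lemma plunnecke_cells {X H G D : Set ℝ} {δ lam : ℝ} (hδ : 0 < δ) (hX : ∃ B, ∀ x ∈ X, |x| ≤ B)
    (hXne : X.Nonempty) (hH : ∃ B, ∀ x ∈ H, |x| ≤ B) (hD : ∃ B, ∀ x ∈ D, |x| ≤ B)
    (hsub : ∀ x ∈ X, ∀ h ∈ H, x + lam * h ∈ D)
    (hG : ∀ a ∈ G, ∀ b ∈ G, ∃ h ∈ H, ∃ h' ∈ H, a * b = h + h') (k : ℕ) :
    ∃ E : Finset ℤ, (E.card : ℝ) ≤ (2 * cn δ D / cn δ X) ^ (2 * k + 2 * k) * cn δ X ∧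
      ∀ w ∈ mulDiffSum G k, ∃ n ∈ E, |lam * w - δ * n| ≤ 2 * k * δ := by
  classical
  have hXf := cells_finite hδ hX
  have hYb : ∃ B, ∀ x ∈ (fun h => lam * h) '' H, |x| ≤ B := by
    obtain ⟨B, hB⟩ := hH
    refine ⟨|lam| * B, ?_⟩
    rintro _ ⟨h, hh, rfl⟩
    rw [abs_mul]
    gcongr
    exact hB h hh
  have hYf := cells_finite hδ hYb
  have hDf := cells_finite hδ hD
  set x := hXf.toFinset with hx
  set y := hYf.toFinset with hy
  have hxc : cn δ X = x.card := Set.ncard_eq_toFinset_card _ hXf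
  have hDc : cn δ D = hDf.toFinset.card := Set.ncard_eq_toFinset_card _ hDf
  have hxne : x.Nonempty := by
    obtain ⟨a, ha⟩ := hXne
    exact ⟨⌊a / δ⌋, hXf.mem_toFinset.2 ⟨a, ha, rfl⟩⟩
  have hx0 : (0 : ℝ) < x.card := by exact_mod_cast hxne.card_pos
  have hsum : (x + y).card ≤ 2 * cn δ D := by
    have h1 : x + y ⊆ hDf.toFinset ∪ hDf.toFinset.image (fun n => n - 1) := by
      intro n hn
      obtain ⟨i, hi, j, hj, rfl⟩ := Finset.mem_add.1 hn
      obtain ⟨a, ha, rfl⟩ := hXf.mem_toFinset.1 hi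
      obtain ⟨_, ⟨h, hh, rfl⟩, rfl⟩ := hYf.mem_toFinset.1 hj
      have hmem : ⌊a / δ + lam * h / δ⌋ ∈ hDf.toFinset :=
        hDf.mem_toFinset.2 ⟨a + lam * h, hsub a ha h hh, by simp only [add_div]⟩
      have l1 := Int.le_floor_add (a / δ) (lam * h / δ)
      have l2 := Int.le_floor_add_floor (a / δ) (lam * h / δ)
      rw [Finset.mem_union, Finset.mem_image]
      rcases eq_or_lt_of_le l1 with e | e
      · left
        simp only
        rwa [e]
      · right
        exact ⟨_, hmem, by simp only; omega⟩
    calc (x + y).card ≤ _ := Finset.card_le_card h1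
      _ ≤ hDf.toFinset.card + (hDf.toFinset.image (fun n => n - 1)).card :=
          Finset.card_union_le _ _
      _ ≤ hDf.toFinset.card + hDf.toFinset.card := add_le_add le_rfl Finset.card_image_le
      _ = 2 * cn δ D := by rw [hDc]; ring
  refine ⟨(2 * k) • y - (2 * k) • y, ?_, ?_⟩
  · have h1 := Finset.pluennecke_ruzsa_inequality_nsmul_sub_nsmul_add hxne y (2 * k) (2 * k)
    have h2 : (((2 * k) • y - (2 * k) • y).card : ℝ) ≤
        ((x + y).card / x.card : ℝ) ^ (2 * k + 2 * k) * x.card := by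
      have := (NNRat.cast_le (K := ℝ)).2 h1
      push_cast at this
      exact this
    refine h2.trans ?_
    rw [hxc]
    gcongr
    exact_mod_cast hsum
  · have key : ∀ j : ℕ, ∀ w ∈ mulDiffSum G j, ∃ u ∈ (2 * j) • y, ∃ v ∈ (2 * j) • y,
        |lam * w - δ * ((u : ℝ) - v)| ≤ 2 * j * δ := by
      intro j
      induction j with
      | zero =>
        intro w hw
        have : w = 0 := hw
        refine ⟨0, by simp, 0, by simp, ?_⟩
        simp [this]
      | succ j ih =>
        rintro _ ⟨w, hw, t, ⟨a, ha, b, hb, c, hc, d, hd, rfl⟩, rfl⟩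
        obtain ⟨u, hu, v, hv, huv⟩ := ih w hw
        obtain ⟨h₁, hh₁, h₂, hh₂, e₁⟩ := hG a ha b hb
        obtain ⟨h₃, hh₃, h₄, hh₄, e₂⟩ := hG c hc d hd
        have hm : ∀ h ∈ H, ⌊lam * h / δ⌋ ∈ y := fun h hh =>
          hYf.mem_toFinset.2 ⟨lam * h, ⟨h, hh, rfl⟩, rfl⟩
        have hfl : ∀ h, δ * (⌊lam * h / δ⌋ : ℝ) ≤ lam * h ∧
            lam * h ≤ δ * (⌊lam * h / δ⌋ : ℝ) + δ := by
          intro h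
          have l1 := Int.floor_le (lam * h / δ)
          have l2 := (Int.lt_floor_add_one (lam * h / δ)).le
          rw [le_div_iff₀ hδ] at l1
          rw [div_le_iff₀ hδ] at l2
          constructor <;> linarith
        have hs : (2 * (j + 1)) • y = (2 * j) • y + y + y := by
          rw [show 2 * (j + 1) = 2 * j + 1 + 1 by ring, succ_nsmul, succ_nsmul]
        rw [hs]
        refine ⟨u + ⌊lam * h₁ / δ⌋ + ⌊lam * h₂ / δ⌋,
          Finset.add_mem_add (Finset.add_mem_add hu (hm _ hh₁)) (hm _ hh₂),
          v + ⌊lam * h₃ / δ⌋ + ⌊lam * h₄ / δ⌋,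
          Finset.add_mem_add (Finset.add_mem_add hv (hm _ hh₃)) (hm _ hh₄), ?_⟩
        rw [e₁, e₂]
        push_cast
        obtain ⟨a1, a2⟩ := hfl h₁
        obtain ⟨b1, b2⟩ := hfl h₂
        obtain ⟨c1, c2⟩ := hfl h₃
        obtain ⟨d1, d2⟩ := hfl h₄
        rw [abs_le] at huv ⊢
        constructor <;> nlinarith
    intro w hw
    obtain ⟨u, hu, v, hv, h⟩ := key k w hw
    exact ⟨u - v, Finset.sub_mem_sub hu hv, by push_cast; exact h⟩

/-- If `lam * W` is close to a set `E` of integer multiples of `δ`, then `W` meets few cells; the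
factor `1 / |lam|` comes from undoing the dilation. -/
lemma cn_le_card_of_approx {W : Set ℝ} {δ lam C : ℝ} (hδ : 0 < δ) (hW : ∃ B, ∀ x ∈ W, |x| ≤ B)
    (hlam : 0 < |lam|) (hC : 0 ≤ C) (E : Finset ℤ)
    (hE : ∀ w ∈ W, ∃ n ∈ E, |lam * w - δ * n| ≤ C * δ) :
    (cn δ W : ℝ) ≤ (2 * C / |lam| + 2) * E.card := by
  classical
  obtain ⟨Z, hZ, hc, hinj⟩ := exists_section hδ hW
  rw [← hc]
  choose! f hf hfa using hE
  refine card_le_mul_of_fibers Z E f (by positivity) (fun z hz => hf z (hZ z hz)) ?_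
  intro n _
  have := card_le_of_diam (ℓ := 2 * C * δ / |lam|) hδ (by positivity)
    (Z.filter fun z => f z = n) ?_ ?_
  · have e : 2 * C * δ / |lam| / δ = 2 * C / |lam| := by field_simp
    rwa [e] at this
  · intro a ha b hb
    exact hinj a (Finset.mem_filter.1 ha).1 b (Finset.mem_filter.1 hb).1
  · intro a ha b hb
    rw [Finset.mem_filter] at ha hb
    have h1 := abs_le.1 (hfa a (hZ a ha.1))
    have h2 := abs_le.1 (hfa b (hZ b hb.1))
    rw [ha.2] at h1
    rw [hb.2] at h2
    rw [le_div_iff₀ hlam, mul_comm, ← abs_mul, abs_le]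
    constructor <;> nlinarith

/-! ### Numerical estimates, and properties of `x ↦ x² + γ / x²` -/

/-- The image of a set of measure at least `V / 4` under a map that contracts distances by at most a
factor `η / 8` meets at least about `η * V / δ` cells. -/
lemma expand_count {S : Set ℝ} {F : ℝ → ℝ} {δ η V : ℝ} (hδ : 0 < δ) (hη : 0 < η)
    (hX : ∃ B, ∀ y ∈ F '' S, |y| ≤ B)
    (hF : ∀ p ∈ S, ∀ q ∈ S, η / 8 * |p - q| ≤ |F p - F q|)
    (hv : ENNReal.ofReal (V / 4) ≤ volume S) : V / δ * η ≤ 64 * cn δ (F '' S) := by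
  have := volume_le_count (ℓ := 8 * δ / η) (m := 16 * δ / η) hδ (by positivity) hX ?_ ?_ hv
  · rw [div_mul_eq_mul_div, div_le_iff₀ hδ]
    rw [div_mul_eq_mul_div, le_div_iff₀ hη] at this
    linarith
  · intro p hp q hq h
    have := hF p hp q hq
    rw [le_div_iff₀ hη]
    linarith
  · intro a
    refine (measure_mono Set.inter_subset_right).trans (le_of_eq ?_)
    rw [Real.volume_Icc]
    congr 1
    ring

/-- The product formula behind `G G ⊆ H + H`. -/
lemma jk_one_mul {s t : ℝ} (hs : 0 < s) (ht : 0 < t) :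
    jk 1 s * jk 1 t = jk 1 (s * t) + jk 1 (s * t⁻¹) := by
  unfold jk
  field_simp
  ring

lemma jk_scale {γ s t : ℝ} (hs : 0 < s) (ht : 0 < t) :
    jk γ (s * t) = s ^ 2 * jk (γ / s ^ 4) t := by
  unfold jk
  field_simp

lemma jk_bound {γ s : ℝ} (hγ : 0 < γ) (hs : 0 < s) (B : ℝ) (h1 : B⁻¹ ≤ s) (h2 : s ≤ B)
    (hB : 0 < B) : |jk γ s| ≤ B ^ 2 + γ * B ^ 2 := by
  unfold jk
  rw [abs_of_pos (by positivity)]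
  have : γ / s ^ 2 ≤ γ * B ^ 2 := by
    rw [div_eq_mul_inv, ← inv_pow]
    gcongr
    exact inv_le_of_inv_le₀ hB h1
  gcongr

lemma jk_one_mem {s : ℝ} (hs : s ∈ Icc (1 / 2 : ℝ) 2) : jk 1 s ∈ Icc (1 : ℝ) 5 := by
  obtain ⟨h1, h2⟩ := hs
  have h0 : 0 < s := by linarith
  unfold jk
  have a1 : 1 / 4 ≤ s ^ 2 := by nlinarith
  have a2 : s ^ 2 ≤ 4 := by nlinarith
  generalize s ^ 2 = u at *
  have hu : 0 < u := by linarith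
  have e : u + 1 / u = (u ^ 2 + 1) / u := by field_simp
  rw [e, mem_Icc, le_div_iff₀ hu, div_le_iff₀ hu]
  constructor <;> nlinarith [sq_nonneg (u - 1)]

/-- The bookkeeping of the main argument, with `q = δ ^ ε` and `P = δ ^ (-σ)`; the letters `a`, `d`,
`g`, `w` stand for the covering numbers of `X`, `D`, `G` and the sixfold sumset of `G G - G G`,
`E` for the number of multiples of `δ` given by `plunnecke_cells`, and `l` for `|lam|`. -/
lemma final_numerics {P q a d E w l g : ℝ} (hP : 0 < P) (hq : 0 < q) (hq1 : q ≤ 1) (ha : 0 < a)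
    (hd : 0 < d)
    (h1 : P * q ^ 2 ≤ 64 * a) (h2 : d * q ≤ 3 * P) (h3 : a ≤ 4 * d)
    (h4 : E ≤ (2 * d / a) ^ 24 * a) (h5 : w ≤ (24 / l + 2) * E) (hl : q ≤ l)
    (h6 : P * q ^ 2 ≤ 64 * g) (hM : 10 ^ 70 * q < 1) :
    w * q ^ 77 ≤ g ∧ 4 * w * q ^ 75 ≤ P := by
  have hl0 : 0 < l := by linarith
  have hr : 2 * d / a ≤ 384 / q ^ 3 := by
    rw [div_le_div_iff₀ ha (by positivity)]
    have : d * q * q ^ 2 ≤ 3 * P * q ^ 2 := by gcongr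
    nlinarith
  have hE : E ≤ (384 / q ^ 3) ^ 24 * (12 * P / q) := by
    refine h4.trans ?_
    have : a ≤ 12 * P / q := by
      rw [le_div_iff₀ hq]
      nlinarith
    gcongr
  have hw : w ≤ 26 / q * ((384 / q ^ 3) ^ 24 * (12 * P / q)) := by
    refine h5.trans ?_
    have : 24 / l + 2 ≤ 26 / q := by
      have h7 : 24 / l ≤ 24 / q := by gcongr
      have h8 : 2 ≤ 2 / q := by rw [le_div_iff₀ hq]; linarith
      have h9 : 26 / q = 24 / q + 2 / q := by ring
      linarith
    have h10 : 0 < 24 / l + 2 := by positivity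
    calc (24 / l + 2) * E ≤ (24 / l + 2) * ((384 / q ^ 3) ^ 24 * (12 * P / q)) := by gcongr
      _ ≤ _ := by gcongr
  have hw2 : w * q ^ 74 ≤ 312 * 384 ^ 24 * P := by
    calc w * q ^ 74 ≤ 26 / q * ((384 / q ^ 3) ^ 24 * (12 * P / q)) * q ^ 74 := by gcongr
      _ = 312 * 384 ^ 24 * P := by
          rw [div_pow, ← pow_mul]
          field_simp
          ring
  have hc : (4 * 64 * (312 * 384 ^ 24) : ℝ) ≤ 10 ^ 70 := by norm_num
  constructor
  · have e : w * q ^ 77 = (w * q ^ 74) * q * q ^ 2 := by ring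
    have h11 : (w * q ^ 74) * q * q ^ 2 ≤ (312 * 384 ^ 24 * P) * q * q ^ 2 := by gcongr
    have h12 : (312 * 384 ^ 24 * P) * q * q ^ 2 = (312 * 384 ^ 24 * q) * (P * q ^ 2) := by ring
    have h13 : 64 * (312 * 384 ^ 24 * q) ≤ 1 := by
      have : 4 * 64 * (312 * 384 ^ 24) * q ≤ 10 ^ 70 * q := by gcongr
      linarith
    have h14 : 0 < P * q ^ 2 := by positivity
    have h15 : 64 * (312 * 384 ^ 24 * q) * (P * q ^ 2) ≤ 1 * (P * q ^ 2) := by gcongr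
    linarith
  · have e : 4 * w * q ^ 75 = 4 * (w * q ^ 74) * q := by ring
    have h11 : 4 * (w * q ^ 74) * q ≤ 4 * (312 * 384 ^ 24 * P) * q := by gcongr
    have h13 : 4 * (312 * 384 ^ 24) * q ≤ 1 := by
      have : 4 * 64 * (312 * 384 ^ 24) * q ≤ 10 ^ 70 * q := by gcongr
      linarith
    have h15 : 4 * (312 * 384 ^ 24) * q * P ≤ 1 * P := by gcongr
    linarith

/-- Non-concentration of `G` at scale `ρ` from that of `S` at scale `8 ρ / q ^ 2`. When the latter
scale exceeds `q`, the hypothesis on `S` says nothing, but the claimed bound is at most `1`. -/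
lemma nonconc_numerics {κ q ρ V N : ℝ} (hκ : 0 < κ) (hκ1 : κ < 1) (hq : 0 < q) (hq1 : q ≤ 1)
    (hρ : 0 < ρ) (hV : 0 < V) (hN : 1 ≤ N) (hM : 10 ^ 70 * q < 1) (hρ1 : ρ ≤ 1)
    (h : 8 * ρ / q ^ 2 < q → V / 4 ≤ (8 * ρ / q ^ 2) ^ κ * V * N) :
    q ^ 4 * ρ ^ (-κ) ≤ N := by
  have hρκ : 0 < ρ ^ κ := by positivity
  by_cases hc : 8 * ρ / q ^ 2 < q
  · have h1 := h hc
    rw [Real.rpow_neg hρ.le, ← div_eq_mul_inv, div_le_iff₀ hρκ]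
    have e : 8 * ρ / q ^ 2 = 8 / q ^ 2 * ρ := by ring
    rw [e, Real.mul_rpow (by positivity) hρ.le] at h1
    have h2 : (8 / q ^ 2 : ℝ) ^ κ ≤ 8 / q ^ 2 := by
      conv_rhs => rw [← Real.rpow_one (8 / q ^ 2)]
      apply Real.rpow_le_rpow_of_exponent_le _ hκ1.le
      rw [le_div_iff₀ (by positivity)]
      nlinarith
    have h3 : V / 4 ≤ 8 / q ^ 2 * ρ ^ κ * V * N := h1.trans (by gcongr)
    have h4 : 1 / 4 ≤ 8 / q ^ 2 * ρ ^ κ * N := by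
      have : V * (1 / 4) ≤ V * (8 / q ^ 2 * ρ ^ κ * N) := by linarith
      exact le_of_mul_le_mul_left this hV
    have h5 : q ^ 2 ≤ 32 * (N * ρ ^ κ) := by
      have e2 : 8 / q ^ 2 * ρ ^ κ * N = 8 * (N * ρ ^ κ) / q ^ 2 := by ring
      rw [e2, le_div_iff₀ (by positivity)] at h4
      linarith
    have h6 : q ^ 4 ≤ q ^ 2 / 32 := by
      have : q ^ 2 ≤ 1 / 32 := by nlinarith
      nlinarith [sq_nonneg q]
    linarith
  · rw [not_lt, le_div_iff₀ (by positivity)] at hc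
    have h1 : ρ ^ (-κ) ≤ ρ⁻¹ := by
      rw [← Real.rpow_neg_one]
      exact Real.rpow_le_rpow_of_exponent_ge hρ hρ1 (by linarith)
    refine le_trans ?_ hN
    calc q ^ 4 * ρ ^ (-κ) ≤ q ^ 4 * ρ⁻¹ := by gcongr
      _ ≤ 1 := by
          rw [← div_eq_mul_inv, div_le_one hρ]
          have : q ^ 4 = q * (q * q ^ 2) := by ring
          rw [this]
          have h3 : q * (q * q ^ 2) ≤ q * (8 * ρ) := by gcongr
          nlinarith

/-! ### The amplification -/

set_option maxHeartbeats 2000000 in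
/-- **Scalar amplification, real case.** For all `0 < σ < 1` and `0 < κ < 1` there is
`ε₃ > 0` such that for all small `δ > 0`: if `S ⊆ [1/2,2]` is a finite union of closed
`δ`-intervals, closed under `x ↦ 1/x`, with `|S| = δ^{1−σ}` and no concentration at
scales `δ < ρ < δ^{ε₃}`, and `γ, λ ∈ ℝ` with `γ > 0` and `|λ| ≥ δ^{ε₃}`, then
`D = {xy + γ/(xy) + λ(x/y + y/x) : x, y ∈ S_{(4)}}` has `N_δ(D) ≥ δ^{−ε₃−σ}`. -/
theorem scalar_amplification_real :
    ∀ σ κ : ℝ, 0 < σ → σ < 1 → 0 < κ → κ < 1 →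
      ∃ ε₃ : ℝ, 0 < ε₃ ∧ ∃ δ₀ : ℝ, 0 < δ₀ ∧
        ∀ δ : ℝ, 0 < δ → δ < δ₀ →
          ∀ S : Set ℝ, S ⊆ Icc (1 / 2 : ℝ) 2 →
            (∃ T : Finset ℝ, S = ⋃ t ∈ T, Icc t (t + δ)) →
            S⁻¹ = S →
            volume S = ENNReal.ofReal (δ ^ (1 - σ)) →
            (∀ ρ : ℝ, δ < ρ → ρ < δ ^ ε₃ →
              ∀ a : ℝ, volume (S ∩ Icc (a - ρ) (a + ρ)) <
                ENNReal.ofReal (ρ ^ κ) * volume S) →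
            ∀ γ lam : ℝ, 0 < γ → δ ^ ε₃ ≤ |lam| →
              δ ^ (-ε₃ - σ) ≤
                (covN (fun x y : ℝ => |x - y|) δ
                  {d : ℝ | ∃ x ∈ S * S * S * S, ∃ y ∈ S * S * S * S,
                    d = x * y + γ / (x * y) + lam * (x / y + y / x)} : ℝ) := by
  intro σ κ hσ hσ1 hκ hκ1
  obtain ⟨εB, hεB, δB, hδB, hring⟩ :=
    discretized_ring (c := (1 - σ) / 2) hκ hκ1 (by linarith) (by linarith)
  obtain ⟨ε, hε, hε1, hε2, hε3⟩ : ∃ ε : ℝ, 0 < ε ∧ 200 * ε ≤ εB ∧ 200 * ε ≤ 1 - σ ∧ 200 * ε ≤ 1 :=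
    ⟨min εB (1 - σ) / 200, div_pos (lt_min hεB (by linarith)) (by norm_num),
      by linarith [min_le_left εB (1 - σ)], by linarith [min_le_right εB (1 - σ)],
      by linarith [min_le_right εB (1 - σ)]⟩
  obtain ⟨d₁, hd₁, hd₁1, hs₁⟩ := exists_small (10 ^ 70) hε
  obtain ⟨d₂, hd₂, -, hs₂⟩ := exists_small 2 (show 0 < 2 * ε * κ by positivity)
  refine ⟨ε, hε, min δB (min d₁ d₂), by positivity, ?_⟩
  intro δ hδ hlt S hS _ hinv hvol hnc γ lam hγ hlam
  have hδδB : δ < δB := hlt.trans_le (min_le_left _ _)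
  have hs₁ := hs₁ δ hδ (hlt.trans_le ((min_le_right _ _).trans (min_le_left _ _)))
  have hs₂ := hs₂ δ hδ (hlt.trans_le ((min_le_right _ _).trans (min_le_right _ _)))
  have hδ1 : δ < 1 :=
    (hlt.trans_le ((min_le_right _ _).trans (min_le_left _ _))).trans_le hd₁1
  by_contra hcon
  rw [not_le] at hcon
  set q := δ ^ ε with hq
  have hq0 : 0 < q := Real.rpow_pos_of_pos hδ _
  have hq1 : q < 1 := Real.rpow_lt_one hδ.le hδ1 hε
  have hqpow : ∀ n : ℕ, q ^ n = δ ^ (n * ε) := fun n => by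
    rw [hq, ← Real.rpow_natCast, ← Real.rpow_mul hδ.le]; ring_nf
  set V := δ ^ (1 - σ) with hV
  have hV0 : 0 < V := Real.rpow_pos_of_pos hδ _
  have hball : ∀ ρ, δ < ρ → ρ < q → ∀ a,
      volume (S ∩ Icc (a - ρ) (a + ρ)) ≤ ENNReal.ofReal (ρ ^ κ * V) := by
    intro ρ h1 h2 a
    have hρ : 0 < ρ := hδ.trans h1
    rw [ENNReal.ofReal_mul (by positivity), ← hvol]
    exact (hnc ρ h1 h2 a).le
  have hball2 : ∀ a, volume (S ∩ Icc (a - q ^ 2) (a + q ^ 2)) ≤ ENNReal.ofReal (V / 2) := by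
    intro a
    refine (hball (q ^ 2) ?_ (by nlinarith) a).trans (ENNReal.ofReal_le_ofReal ?_)
    · rw [hqpow]
      conv_lhs => rw [← Real.rpow_one δ]
      exact Real.rpow_lt_rpow_of_exponent_gt hδ hδ1 (by push_cast; linarith)
    · rw [hqpow, ← Real.rpow_mul hδ.le]
      push_cast
      nlinarith
  have hSne : S.Nonempty := by
    rw [Set.nonempty_iff_ne_empty]
    rintro rfl
    rw [measure_empty, eq_comm, ENNReal.ofReal_eq_zero] at hvol
    linarith
  have hSinv : ∀ s ∈ S, s⁻¹ ∈ S := fun s hs => by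
    rw [← hinv]
    exact Set.inv_mem_inv.2 hs
  have hpos : ∀ s ∈ S, 0 < s := fun s hs => by linarith [(hS hs).1]
  obtain ⟨s₀, hs₀⟩ := hSne
  have hs₀0 := hpos s₀ hs₀
  obtain ⟨S₁, hS₁, hv₁, hexp₁⟩ :=
    exists_side hS one_pos (show 0 < q ^ 2 by positivity) hV0 hvol hball2
  obtain ⟨S₂, hS₂, hv₂, hexp₂⟩ :=
    exists_side hS (show 0 < γ / s₀ ^ 4 by positivity) (show 0 < q ^ 2 by positivity) hV0 hvol hball2
  have hne_of : ∀ S' : Set ℝ, ENNReal.ofReal (V / 4) ≤ volume S' → S'.Nonempty := by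
    intro S' h
    rw [Set.nonempty_iff_ne_empty]
    rintro rfl
    rw [measure_empty, nonpos_iff_eq_zero, ENNReal.ofReal_eq_zero] at h
    linarith
  have hne₁ := hne_of S₁ hv₁
  have hne₂ := hne_of S₂ hv₂
  -- `S₁` and `S₂` are pieces of `S` on which `jk 1` and `s ↦ jk γ (s₀ s)` are expanding.
  set D := {d : ℝ | ∃ x ∈ S * S * S * S, ∃ y ∈ S * S * S * S,
    d = x * y + γ / (x * y) + lam * (x / y + y / x)} with hDdef
  set G := jk 1 '' S₁ with hG
  set X := (fun s => jk γ (s₀ * s)) '' S₂ with hX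
  set H := jk 1 '' (S * S) with hH
  have hprod : ∀ x ∈ S * S, x ∈ Icc (1 / 4 : ℝ) 4 := by
    rintro _ ⟨a, ha, b, hb, rfl⟩
    obtain ⟨a1, a2⟩ := hS ha
    obtain ⟨b1, b2⟩ := hS hb
    simp only [mem_Icc]
    constructor <;> nlinarith
  have hprod4 : ∀ x ∈ S * S * S * S, x ∈ Icc (1 / 16 : ℝ) 16 := by
    rintro _ ⟨_, ⟨x, hx, c, hc, rfl⟩, d, hd, rfl⟩
    obtain ⟨a1, a2⟩ := hprod x hx
    obtain ⟨b1, b2⟩ := hprod _ (Set.mul_mem_mul hc hd)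
    simp only [mem_Icc, mul_assoc] at *
    constructor <;> nlinarith
  have hDb : ∃ B, ∀ x ∈ D, |x| ≤ B := by
    refine ⟨256 + γ * 256 + |lam| * 512, ?_⟩
    rintro _ ⟨x, hx, y, hy, rfl⟩
    obtain ⟨x1, x2⟩ := hprod4 x hx
    obtain ⟨y1, y2⟩ := hprod4 y hy
    have hx0 : 0 < x := by linarith
    have hy0 : 0 < y := by linarith
    refine (abs_add_le _ _).trans (add_le_add ((abs_add_le _ _).trans (add_le_add ?_ ?_)) ?_)
    · rw [abs_of_pos (by positivity)]
      nlinarith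
    · rw [abs_of_pos (by positivity), div_le_iff₀ (by positivity), mul_assoc]
      have : 1 ≤ 256 * (x * y) := by nlinarith
      nlinarith
    · rw [abs_mul, abs_of_pos (show 0 < x / y + y / x by positivity)]
      have h1 : x / y ≤ 256 := by rw [div_le_iff₀ hy0]; linarith
      have h2 : y / x ≤ 256 := by rw [div_le_iff₀ hx0]; linarith
      gcongr
      linarith
  have hXb : ∃ B, ∀ x ∈ X, |x| ≤ B := by
    refine ⟨4 ^ 2 + γ * 4 ^ 2, ?_⟩
    rintro _ ⟨s, hs, rfl⟩
    have h1 := hprod _ (Set.mul_mem_mul hs₀ (hS₂ hs))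
    exact jk_bound hγ (by linarith [h1.1]) 4 (by linarith [h1.1]) h1.2 (by norm_num)
  have hHb : ∃ B, ∀ x ∈ H, |x| ≤ B := by
    refine ⟨4 ^ 2 + 1 * 4 ^ 2, ?_⟩
    rintro _ ⟨s, hs, rfl⟩
    have h1 := hprod _ hs
    exact jk_bound one_pos (by linarith [h1.1]) 4 (by linarith [h1.1]) h1.2 (by norm_num)
  have hGsub : G ⊆ Icc 1 5 := by
    rintro _ ⟨s, hs, rfl⟩
    exact jk_one_mem (hS (hS₁ hs))
  have hGne : G.Nonempty := hne₁.image _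
  have hGb := bdd_of_subset_Icc hGsub
  -- with `x = s₀ s u v` and `y = s₀ s u⁻¹ v⁻¹` one has `x y = (s₀ s)²` and `x / y = (u v)²`
  have hXH : ∀ x ∈ X, ∀ h ∈ H, x + lam * h ∈ D := by
    rintro _ ⟨s, hs, rfl⟩ _ ⟨_, ⟨u, hu, v, hv, rfl⟩, rfl⟩
    have hs' := hS₂ hs
    refine ⟨s₀ * s * u * v, Set.mul_mem_mul (Set.mul_mem_mul (Set.mul_mem_mul hs₀ hs') hu) hv,
      s₀ * s * u⁻¹ * v⁻¹, Set.mul_mem_mul (Set.mul_mem_mul (Set.mul_mem_mul hs₀ hs')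
        (hSinv u hu)) (hSinv v hv), ?_⟩
    have := hpos s hs'
    have := hpos u hu
    have := hpos v hv
    simp only [jk]
    field_simp
  have hGH : ∀ a ∈ G, ∀ b ∈ G, ∃ h ∈ H, ∃ h' ∈ H, a * b = h + h' := by
    rintro _ ⟨s, hs, rfl⟩ _ ⟨t, ht, rfl⟩
    have hs' := hS₁ hs
    have ht' := hS₁ ht
    exact ⟨_, ⟨_, Set.mul_mem_mul hs' ht', rfl⟩, _, ⟨_, Set.mul_mem_mul hs' (hSinv t ht'), rfl⟩,
      jk_one_mul (hpos s hs') (hpos t ht')⟩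
  have hXcount : V / δ * q ^ 2 ≤ 64 * cn δ X := by
    refine expand_count hδ (by positivity) hXb ?_ hv₂
    intro x hx y hy
    rw [jk_scale hs₀0 (hpos _ (hS₂ hx)), jk_scale hs₀0 (hpos _ (hS₂ hy)), ← mul_sub, abs_mul,
      abs_of_pos (show 0 < s₀ ^ 2 by positivity)]
    have h1 : 1 / 4 ≤ s₀ ^ 2 := by nlinarith [(hS hs₀).1]
    have h2 := hexp₂ x hx y hy
    have h3 : 0 ≤ q ^ 2 / 2 * |x - y| := by positivity
    nlinarith
  have hGexp : ∀ x ∈ S₁, ∀ y ∈ S₁, q ^ 2 / 8 * |x - y| ≤ |jk 1 x - jk 1 y| := by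
    intro x hx y hy
    have h2 := hexp₁ x hx y hy
    have h3 : 0 ≤ q ^ 2 / 2 * |x - y| := by positivity
    linarith
  have hGcount : V / δ * q ^ 2 ≤ 64 * cn δ G :=
    expand_count hδ (by positivity) hGb hGexp hv₁
  have hP : V / δ = δ ^ (-σ) := by
    rw [hV, Real.rpow_sub hδ, Real.rpow_one, Real.rpow_neg hδ.le]
    field_simp
  have hP0 : 0 < V / δ := by positivity
  have hDcount : cn δ D * q ≤ 3 * (V / δ) := by
    have h1 := cn_le_covN hδ hDb
    have h2 : δ ^ (-ε - σ) * q = V / δ := by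
      rw [hP, hq, ← Real.rpow_add hδ]
      ring_nf
    have h3 : (cn δ D : ℝ) ≤ 3 * δ ^ (-ε - σ) := by linarith
    calc cn δ D * q ≤ 3 * δ ^ (-ε - σ) * q := by gcongr
      _ = 3 * (V / δ) := by rw [mul_assoc, h2]
  have hXne : X.Nonempty := hne₂.image _
  have hX1 := cn_pos hδ hXb hXne
  obtain ⟨h₀, hh₀⟩ : H.Nonempty := ⟨_, _, Set.mul_mem_mul hs₀ hs₀, rfl⟩
  have hXD : (cn δ X : ℝ) ≤ 4 * cn δ D := by
    have := cn_comp hδ hδ hδ.le hXb hDb (fun x => x + lam * h₀) (fun x hx => hXH x hx h₀ hh₀)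
      (fun x _ y _ h => by simpa using h.le)
    have e : 2 * δ / δ + 2 = 4 := by field_simp; norm_num
    rwa [e] at this
  have hlam0 : 0 < |lam| := hq0.trans_le hlam
  have hWb := mulDiffSum_bdd hGsub 6
  obtain ⟨E, hE, hEa⟩ := plunnecke_cells hδ hXb hXne hHb hDb hXH hGH 6
  have hW : (cn δ (mulDiffSum G 6) : ℝ) ≤ (24 / |lam| + 2) * E.card := by
    have := cn_le_card_of_approx (C := 12) hδ hWb hlam0 (by norm_num) E
      (fun w hw => by
        obtain ⟨n, hn, h⟩ := hEa w hw
        exact ⟨n, hn, h.trans (by norm_num)⟩)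
    norm_num at this
    exact this
  obtain ⟨hn1, hn2⟩ := final_numerics hP0 hq0 hq1.le (by linarith) (by linarith) hXcount hDcount
    hXD (by simpa using hE) hW hlam hGcount hs₁
  have hpow_le : ∀ n : ℕ, n ≤ 200 → δ ^ εB ≤ q ^ n := by
    intro n hn
    rw [hqpow]
    apply Real.rpow_le_rpow_of_exponent_ge hδ hδ1.le
    have : (n : ℝ) ≤ 200 := by exact_mod_cast hn
    nlinarith
  refine hring δ hδ hδδB G hGsub hGne ?_ ?_ ?_
  · have h1 : 0 < δ ^ εB := Real.rpow_pos_of_pos hδ _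
    rw [Real.rpow_neg hδ.le, inv_mul_eq_div, le_div_iff₀ h1]
    exact le_trans (by gcongr; exact hpow_le 77 (by norm_num)) hn1
  · obtain ⟨g₀, hg₀⟩ := hGne
    have hg1 := (hGsub hg₀).1
    have h1 := cn_comp hδ hδ hδ.le hGb hWb (fun x => (x - g₀) * g₀)
      (fun x hx => mulDiffSum_mono ⟨g₀, hg₀⟩ (by norm_num : 1 ≤ 6)
        (mulDiff_sub_one (sub_mul_mem hx hg₀ hg₀))) (fun x _ y _ h => by
          have e : (x - g₀) * g₀ - (y - g₀) * g₀ = (x - y) * g₀ := by ring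
          simp only [e, abs_mul] at h
          rw [abs_of_pos (show 0 < g₀ by linarith)] at h
          nlinarith [abs_nonneg (x - y)])
    have e : 2 * δ / δ + 2 = 4 := by field_simp; norm_num
    rw [e] at h1
    have h2 : (cn δ G : ℝ) * q ^ 75 ≤ V / δ := le_trans (by gcongr) hn2
    rw [hP, hqpow] at h2
    have h3 : 0 < δ ^ (((75 : ℕ) : ℝ) * ε) := Real.rpow_pos_of_pos hδ _
    rw [← le_div_iff₀ h3, ← Real.rpow_sub hδ] at h2
    refine h2.trans (Real.rpow_le_rpow_of_exponent_ge hδ hδ1.le ?_)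
    push_cast
    linarith
  · intro ρ hρ hρ1
    have hρ0 : 0 < ρ := hδ.trans_le hρ
    have h1 := nonconc_numerics (V := V) hκ hκ1 hq0 hq1.le hρ0 hV0 (cn_pos hρ0 hGb hGne) hs₁ hρ1
      (fun hlt' => by
        refine volume_le_count (ℓ := 8 * ρ / q ^ 2) hρ0 (by positivity) hGb ?_ ?_ hv₁
        · intro x hx y hy h
          have := hGexp x hx y hy
          rw [le_div_iff₀ (by positivity)]
          linarith
        · intro a
          refine (measure_mono (Set.inter_subset_inter_left _ hS₁)).trans (hball _ ?_ hlt' a)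
          rw [lt_div_iff₀ (by positivity)]
          have h2 : δ * q ^ 2 ≤ δ * 1 := by gcongr; exact pow_le_one₀ hq0.le hq1.le
          linarith)
    refine le_trans ?_ h1
    gcongr
    exact hpow_le 4 (by norm_num)
end

section
/- For every κ > 0 there exist a constant C = C(κ) and δ₀ > 0 such that for all 0 < δ < δ₀ the following holds. Let g₁ ∈ SL₂(ℂ) ∩ B₁(1) satisfy dist(g₁, {1, −1}) ≥ δ^κ, and suppose u ∈ GL₂(ℂ) with ‖u‖, ‖u⁻¹‖ ≤ δ^{−κ} is such that u g₁ u⁻¹ is a diagonal matrix diag(λ, 1/λ) with |λ − 1/λ| ≥ δ^κ. Let g₂ ∈ SL₂(ℂ) with ‖g₂‖ ≤ 2 be such that |(u g₂ u⁻¹)₁₂ · (u g₂ u⁻¹)₂₁| ≥ δ^κ. Then, identifying 2×2 complex matrices with vectors in ℂ⁴, |det(1, g₁, g₂, g₁ g₂)| ≥ δ^{Cκ}, where det denotes the determinant of the 4×4 complex matrix whose columns are the entry-vectors of 1, g₁, g₂ and g₁g₂. -/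
/-!
The determinant `det(1, A, B, AB)` equals the determinant of the commutator
`AB - BA` (`det4C_eq_commutator`), so it is unchanged when `A` and `B` are conjugated
simultaneously. After conjugating by `u` the first matrix is `diag(λ, λ⁻¹)` and the commutator
determinant is explicitly `(λ - λ⁻¹)² h₁₂ h₂₁` with `h = u g₂ u⁻¹`. Both `λ - λ⁻¹` and
`h₁₂ h₂₁` have modulus at least `δ^κ`, which gives the bound with `C = 3` and `δ₀ = 1`.
-/


open scoped Pointwise

/-- Frobenius distance between two 2×2 matrices over `ℝ` or `ℂ`. -/
noncomputable def frobDist {𝕜 : Type*} [RCLike 𝕜] (A B : Matrix (Fin 2) (Fin 2) 𝕜) : ℝ :=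
  Real.sqrt (∑ i : Fin 2, ∑ j : Fin 2, ‖A i j - B i j‖ ^ 2)

/-- The vector in `ℂ⁴` of the entries of a 2×2 complex matrix. -/
def entryVecC (g : Matrix (Fin 2) (Fin 2) ℂ) : Fin 4 → ℂ := ![g 0 0, g 0 1, g 1 0, g 1 1]

/-- The determinant of the 4×4 complex matrix whose columns are the entry-vectors of
four 2×2 matrices. -/
noncomputable def det4C (g : Fin 4 → Matrix (Fin 2) (Fin 2) ℂ) : ℂ :=
  Matrix.det (Matrix.of fun i j => entryVecC (g j) i)

/-- A polynomial identity in the eight entries; it makes the conjugation invariance of the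
left-hand side visible. -/
theorem det4C_eq_commutator (A B : Matrix (Fin 2) (Fin 2) ℂ) :
    det4C ![1, A, B, A * B] = (A * B - B * A).det := by
  have hM : (Matrix.of fun i j => entryVecC (![1, A, B, A * B] j) i) =
      !![1, A 0 0, B 0 0, (A * B) 0 0; 0, A 0 1, B 0 1, (A * B) 0 1;
        0, A 1 0, B 1 0, (A * B) 1 0; 1, A 1 1, B 1 1, (A * B) 1 1] := by
    ext i j
    fin_cases i <;> fin_cases j <;> rfl
  rw [det4C, hM, Matrix.det_succ_column_zero]
  simp [Fin.sum_univ_succ, Matrix.det_fin_three, Matrix.det_fin_two, Matrix.mul_apply,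
    Fin.succAbove]
  ring

theorem det_commutator_conj {u : Matrix (Fin 2) (Fin 2) ℂ} (hu : IsUnit u)
    (A B : Matrix (Fin 2) (Fin 2) ℂ) :
    ((u * A * u⁻¹) * (u * B * u⁻¹) - (u * B * u⁻¹) * (u * A * u⁻¹)).det =
      (A * B - B * A).det := by
  have hinv : u⁻¹ * u = 1 :=
    Matrix.nonsing_inv_mul u ((Matrix.isUnit_iff_isUnit_det u).1 hu)
  have cancel : ∀ X Y : Matrix (Fin 2) (Fin 2) ℂ,
      (u * X * u⁻¹) * (u * Y * u⁻¹) = u * (X * Y) * u⁻¹ := by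
    intro X Y
    calc (u * X * u⁻¹) * (u * Y * u⁻¹) = u * X * (u⁻¹ * u) * Y * u⁻¹ := by
          simp only [Matrix.mul_assoc]
      _ = u * (X * Y) * u⁻¹ := by rw [hinv, Matrix.mul_one]; simp only [Matrix.mul_assoc]
  rw [cancel, cancel, ← Matrix.sub_mul, ← Matrix.mul_sub]
  exact Matrix.det_conj hu _

theorem det_commutator_diag (a b : ℂ) (h : Matrix (Fin 2) (Fin 2) ℂ) :
    (Matrix.of ![![a, 0], ![0, b]] * h - h * Matrix.of ![![a, 0], ![0, b]]).det =
      (a - b) ^ 2 * (h 0 1 * h 1 0) := by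
  simp only [Matrix.det_fin_two, Matrix.sub_apply, Matrix.mul_apply, Fin.sum_univ_two,
    Matrix.of_apply, Matrix.cons_val_zero, Matrix.cons_val_one]
  ring

/-- **Finding independent directions.** For every `κ > 0` there are `C > 0` and
`δ₀ > 0` such that for all `0 < δ < δ₀`: if `g₁ ∈ SL₂(ℂ) ∩ B₁(1)` with
`dist(g₁, {1,−1}) ≥ δ^κ`, `u ∈ GL₂(ℂ)` with `‖u‖, ‖u⁻¹‖ ≤ δ^{−κ}` diagonalizes `g₁`
as `diag(λ, 1/λ)` with `|λ − 1/λ| ≥ δ^κ`, and `g₂ ∈ SL₂(ℂ)` with `‖g₂‖ ≤ 2` and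
`|(u g₂ u⁻¹)₁₂ (u g₂ u⁻¹)₂₁| ≥ δ^κ`, then `|det(1, g₁, g₂, g₁g₂)| ≥ δ^{Cκ}`. -/
theorem independent_directions :
    ∀ κ : ℝ, 0 < κ →
      ∃ C δ₀ : ℝ, 0 < C ∧ 0 < δ₀ ∧
        ∀ δ : ℝ, 0 < δ → δ < δ₀ →
          ∀ g₁ : Matrix (Fin 2) (Fin 2) ℂ,
            g₁.det = 1 → frobDist g₁ 1 ≤ 1 →
            δ ^ κ ≤ frobDist g₁ 1 → δ ^ κ ≤ frobDist g₁ (-1) →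
            ∀ u : Matrix (Fin 2) (Fin 2) ℂ, IsUnit u →
              frobDist u 0 ≤ δ ^ (-κ) → frobDist u⁻¹ 0 ≤ δ ^ (-κ) →
              ∀ lam : ℂ,
                u * g₁ * u⁻¹ = Matrix.of ![![lam, 0], ![0, lam⁻¹]] →
                δ ^ κ ≤ ‖lam - lam⁻¹‖ →
                ∀ g₂ : Matrix (Fin 2) (Fin 2) ℂ,
                  g₂.det = 1 → frobDist g₂ 0 ≤ 2 →
                  δ ^ κ ≤ ‖(u * g₂ * u⁻¹) 0 1 * (u * g₂ * u⁻¹) 1 0‖ →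
                  δ ^ (C * κ) ≤ ‖det4C ![1, g₁, g₂, g₁ * g₂]‖ := by
  intro κ _
  refine ⟨3, 1, by norm_num, one_pos, ?_⟩
  intro δ hδ _ g₁ _ _ _ _ u hu _ _ lam hdiag hlam g₂ _ _ hoff
  have hpos : 0 < δ ^ κ := Real.rpow_pos_of_pos hδ κ
  rw [det4C_eq_commutator, ← det_commutator_conj hu, hdiag, det_commutator_diag, norm_mul,
    norm_pow, show (3 : ℝ) * κ = κ * (3 : ℕ) by push_cast; ring, Real.rpow_mul hδ.le,
    Real.rpow_natCast, pow_succ]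
  gcongr
end
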